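/- arXiv:1202.0015 — 3 statements merged into one kernel-verified Lean document; each statement's English description precedes it below -/
import Mathlib

section
/- (De Bruijn's identity) For every a > 0, the differential entropy h(a) = −∫ f_Y(y;a) log f_Y(y;a) dy is differentiable in a and its derivative equals one half of the Fisher information: d/da h(a) = (1/2) · ∫ f_Y(y;a) (∂/∂y log f_Y(y;a))² dy. -/
open MeasureTheory Filter

/-!
Write `f a` for the density of `X + √a·W`, the convolution of the law of `X` with the Gaussian
kernel of variance `a`. The Gaussian kernel solves the heat equation, hence `∂ₐf = ½ ∂²f/∂y²`, so
differentiating under the integral gives `h'(a) = -½ ∫ f'' (log f + 1)`, and integrating by parts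
turns this into `½ ∫ f'² / f`.

Both steps need integrable majorants. For `a` near `b` the Gaussian kernel of variance `a` and its
derivatives are at most a constant times the Gaussian kernel of variance `4b`, so that `f`, `f'`
and `f''` are dominated by the output density at noise level `4b`, which has a finite second
moment. Jensen's inequality gives `|log f(a, y)| = O(1 + y²)`, and the Cauchy–Schwarz inequality
bounds `f'² / f`.
-/

section Entropy

/-- The differential entropy of a probability density on the real line. -/
noncomputable def differentialEntropy (f : ℝ → ℝ) : ℝ :=
  -∫ y, f y * Real.log (f y)

/-- The Fisher information of a probability density with respect to a location parameter. -/
noncomputable def fisherInformation (f : ℝ → ℝ) : ℝ :=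
  ∫ y, f y * (deriv (fun y' ↦ Real.log (f y')) y) ^ 2

theorem hasDerivAt_differentialEntropy {f f' : ℝ → ℝ → ℝ} {B : ℝ → ℝ} {s : Set ℝ} {b : ℝ}
    (hs : s ∈ nhds b) (hf : ∀ a ∈ s, Continuous (f a)) (hf' : Continuous (f' b))
    (hpos : ∀ a ∈ s, ∀ y, 0 < f a y) (hderiv : ∀ a ∈ s, ∀ y, HasDerivAt (f · y) (f' a y) a)
    (hint : Integrable fun y ↦ f b y * Real.log (f b y)) (hB : Integrable B)
    (hle : ∀ a ∈ s, ∀ y, |f' a y * (Real.log (f a y) + 1)| ≤ B y) :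
    HasDerivAt (fun a ↦ differentialEntropy (f a)) (-∫ y, f' b y * (Real.log (f b y) + 1)) b := by
  have hlog : ∀ a ∈ s, Continuous fun y ↦ Real.log (f a y) := fun a ha ↦
    (hf a ha).log fun y ↦ (hpos a ha y).ne'
  have hb : b ∈ s := mem_of_mem_nhds hs
  refine (hasDerivAt_integral_of_dominated_loc_of_deriv_le
    (F' := fun a y ↦ f' a y * (Real.log (f a y) + 1)) hs ?_ hint ?_
    (ae_of_all _ fun y a ha ↦ hle a ha y) hB (ae_of_all _ fun y a ha ↦ ?_)).2.neg
  · filter_upwards [hs] with a ha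
    exact ((hf a ha).mul (hlog a ha)).aestronglyMeasurable
  · exact (hf'.mul ((hlog b hb).add continuous_const)).aestronglyMeasurable
  · have hne := (hpos a ha y).ne'
    refine ((hderiv a ha y).mul ((hderiv a ha y).log hne)).congr_deriv ?_
    field_simp

theorem integral_deriv2_mul_log_add_one {f f' f'' : ℝ → ℝ} (hpos : ∀ y, 0 < f y)
    (hf : ∀ y, HasDerivAt f (f' y) y) (hf' : ∀ y, HasDerivAt f' (f'' y) y)
    (h₂ : Integrable fun y ↦ f'' y * (Real.log (f y) + 1))
    (h₁ : Integrable fun y ↦ f' y * (Real.log (f y) + 1))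
    (hF : Integrable fun y ↦ f' y ^ 2 / f y) :
    ∫ y, f'' y * (Real.log (f y) + 1) = -fisherInformation f := by
  have hlog : ∀ y, HasDerivAt (fun y ↦ Real.log (f y)) (f' y / f y) y := fun y ↦
    (hf y).log (hpos y).ne'
  have fisher_eq : fisherInformation f = ∫ y, f' y / f y * f' y := by
    refine integral_congr_ae (ae_of_all _ fun y ↦ ?_)
    have := (hpos y).ne'
    simp only [(hlog y).deriv]
    field_simp
  rw [fisher_eq, ← integral_mul_deriv_eq_deriv_mul_of_integrable (v := f') (v' := f'')
    (fun y _ ↦ (hlog y).add_const 1) (fun y _ ↦ hf' y)]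
  · simp only [mul_comm]
  · exact h₂.congr (ae_of_all _ fun y ↦ mul_comm _ _)
  · exact hF.congr (ae_of_all _ fun y ↦ by simp only [Pi.mul_apply]; ring)
  · exact h₁.congr (ae_of_all _ fun y ↦ mul_comm _ _)

end Entropy

section MeasureConv

/-- The convolution `μ ∗ g` of a measure with a function: if `μ` is the law of `X` and `g` is the
density of an independent variable `Z`, this is the density of `X + Z`. -/
noncomputable def measureConv (μ : Measure ℝ) (g : ℝ → ℝ) (y : ℝ) : ℝ :=
  ∫ x, g (y - x) ∂μ

variable {μ : Measure ℝ} {g g' k : ℝ → ℝ} {C C' : ℝ}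

theorem abs_measureConv_le (y : ℝ) (hk : Integrable (fun x ↦ k (y - x)) μ)
    (h : ∀ u, |g u| ≤ k u) : |measureConv μ g y| ≤ measureConv μ k y :=
  norm_integral_le_of_norm_le (f := fun x ↦ g (y - x)) hk (ae_of_all _ fun x ↦ h (y - x))

variable [IsFiniteMeasure μ]

theorem integrable_comp_sub_left_of_bounded (hg : Continuous g) (hC : ∀ u, |g u| ≤ C) (y : ℝ) :
    Integrable (fun x ↦ g (y - x)) μ :=
  .of_bound (hg.comp (by fun_prop)).aestronglyMeasurable C (ae_of_all _ fun _ ↦ hC _)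

theorem continuous_measureConv (hg : Continuous g) (hC : ∀ u, |g u| ≤ C) :
    Continuous (measureConv μ g) :=
  continuous_of_dominated (fun _ ↦ (hg.comp (by fun_prop)).aestronglyMeasurable)
    (fun _ ↦ ae_of_all _ fun _ ↦ hC _) (integrable_const C)
    (ae_of_all _ fun _ ↦ hg.comp (by fun_prop))

theorem hasDerivAt_measureConv (hg : ∀ u, HasDerivAt g (g' u) u) (hg' : Continuous g')
    (hC : ∀ u, |g u| ≤ C) (hC' : ∀ u, |g' u| ≤ C') (y : ℝ) :
    HasDerivAt (measureConv μ g) (measureConv μ g' y) y := by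
  have hgc : Continuous g := continuous_iff_continuousAt.2 fun u ↦ (hg u).continuousAt
  exact (hasDerivAt_integral_of_dominated_loc_of_deriv_le (s := Set.univ)
    (F := fun y x ↦ g (y - x)) (F' := fun y x ↦ g' (y - x)) univ_mem
    (.of_forall fun y ↦ (integrable_comp_sub_left_of_bounded hgc hC y).aestronglyMeasurable)
    (integrable_comp_sub_left_of_bounded hgc hC y)
    (integrable_comp_sub_left_of_bounded hg' hC' y).aestronglyMeasurable
    (ae_of_all _ fun _ _ _ ↦ hC' _) (integrable_const C')
    (ae_of_all _ fun x y _ ↦ (hg (y - x)).comp_sub_const y x)).2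

theorem hasDerivAt_measureConv_param {g g' : ℝ → ℝ → ℝ} {s : Set ℝ} {b : ℝ} (hs : s ∈ nhds b)
    (hg : ∀ a ∈ s, Continuous (g a)) (hg' : Continuous (g' b))
    (hderiv : ∀ a ∈ s, ∀ u, HasDerivAt (g · u) (g' a u) a)
    (hC : ∀ u, |g b u| ≤ C) (hC' : ∀ a ∈ s, ∀ u, |g' a u| ≤ C') (y : ℝ) :
    HasDerivAt (fun a ↦ measureConv μ (g a) y) (measureConv μ (g' b) y) b := by
  have hb : b ∈ s := mem_of_mem_nhds hs
  refine (hasDerivAt_integral_of_dominated_loc_of_deriv_le (F := fun a x ↦ g a (y - x))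
    (F' := fun a x ↦ g' a (y - x)) hs ?_ (integrable_comp_sub_left_of_bounded (hg b hb) hC y)
    (integrable_comp_sub_left_of_bounded hg' (hC' b hb) y).aestronglyMeasurable
    (ae_of_all _ fun _ a ha ↦ hC' a ha _) (integrable_const C')
    (ae_of_all _ fun _ a ha ↦ hderiv a ha _)).2
  filter_upwards [hs] with a ha
  exact ((hg a ha).comp (by fun_prop)).aestronglyMeasurable

theorem integrable_one_add_sq_mul_measureConv (hμ : Integrable (fun x ↦ x ^ 2) μ)
    (hg₀ : ∀ u, 0 ≤ g u) (hg : Integrable g) (hg₂ : Integrable fun u ↦ u ^ 2 * g u) :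
    Integrable fun y ↦ (1 + y ^ 2) * measureConv μ g y := by
  have hweight : Integrable (fun x ↦ 1 + 2 * x ^ 2) μ :=
    (integrable_const 1).add (hμ.const_mul 2)
  have hmajorant := (hweight.convolution_integrand (.mul ℝ ℝ) hg).add
    ((integrable_const (μ := μ) 1).convolution_integrand (.mul ℝ ℝ) (hg₂.const_mul 2))
  have hmeas : AEStronglyMeasurable (fun p : ℝ × ℝ ↦ g (p.1 - p.2)) (volume.prod μ) := by
    simpa using ((integrable_const (μ := μ) (1 : ℝ)).convolution_integrand (.mul ℝ ℝ)
      hg).aestronglyMeasurable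
  have hprod : Integrable (fun p : ℝ × ℝ ↦ (1 + p.1 ^ 2) * g (p.1 - p.2)) (volume.prod μ) := by
    refine hmajorant.mono' (.mul (by fun_prop) hmeas) (ae_of_all _ fun p ↦ ?_)
    have hp := hg₀ (p.1 - p.2)
    have hsq : 1 + p.1 ^ 2 ≤ (1 + 2 * p.2 ^ 2) + 2 * (p.1 - p.2) ^ 2 := by
      nlinarith [sq_nonneg (p.1 - 2 * p.2)]
    rw [Real.norm_of_nonneg (by positivity)]
    simp only [Pi.add_apply, ContinuousLinearMap.mul_apply']
    linarith [mul_le_mul_of_nonneg_right hsq hp]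
  simpa only [integral_const_mul, measureConv] using hprod.integral_prod_left

end MeasureConv

section HeatKernel

/-- The density of the centred Gaussian of variance `a`. The variance is a real number (unlike in
`ProbabilityTheory.gaussianPDFReal`) because the kernel is differentiated with respect to it. -/
noncomputable def heatKernel (a u : ℝ) : ℝ :=
  (√(2 * Real.pi * a))⁻¹ * Real.exp (-u ^ 2 / (2 * a))

/-- The first space derivative of the heat kernel. -/
noncomputable def heatKernelDeriv (a u : ℝ) : ℝ :=
  -(u / a) * heatKernel a u

/-- The second space derivative of the heat kernel. -/
noncomputable def heatKernelDeriv₂ (a u : ℝ) : ℝ :=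
  (u ^ 2 / a ^ 2 - 1 / a) * heatKernel a u

/-- A common majorant of the heat kernel and its first two space derivatives. -/
noncomputable def heatKernelEnvelope (a u : ℝ) : ℝ :=
  (1 + 1 / a + u ^ 2 / a ^ 2) * heatKernel a u

@[fun_prop]
theorem continuous_heatKernel (a : ℝ) : Continuous (heatKernel a) := by
  unfold heatKernel; fun_prop

@[fun_prop]
theorem continuous_heatKernelDeriv (a : ℝ) : Continuous (heatKernelDeriv a) := by
  unfold heatKernelDeriv; fun_prop

@[fun_prop]
theorem continuous_heatKernelDeriv₂ (a : ℝ) : Continuous (heatKernelDeriv₂ a) := by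
  unfold heatKernelDeriv₂; fun_prop

@[fun_prop]
theorem continuous_heatKernelEnvelope (a : ℝ) : Continuous (heatKernelEnvelope a) := by
  unfold heatKernelEnvelope; fun_prop

variable {a b c : ℝ}

theorem heatKernel_pos (ha : 0 < a) (u : ℝ) : 0 < heatKernel a u := by
  unfold heatKernel; positivity

theorem heatKernel_le (ha : 0 < a) (u : ℝ) : heatKernel a u ≤ (√(2 * Real.pi * a))⁻¹ := by
  refine mul_le_of_le_one_right (by positivity) (Real.exp_le_one_iff.2 ?_)
  rw [neg_div, neg_nonpos]
  positivity

theorem integrable_heatKernel (ha : 0 < a) : Integrable (heatKernel a) := by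
  have hgaussian : heatKernel a = ProbabilityTheory.gaussianPDFReal 0 ⟨a, ha.le⟩ := by
    ext u
    simp only [heatKernel, ProbabilityTheory.gaussianPDFReal, sub_zero]
    rfl
  exact hgaussian ▸ ProbabilityTheory.integrable_gaussianPDFReal 0 _

theorem hasDerivAt_heatKernel (ha : a ≠ 0) (u : ℝ) :
    HasDerivAt (heatKernel a) (heatKernelDeriv a u) u := by
  have hexponent : HasDerivAt (fun u ↦ -u ^ 2 / (2 * a)) (-(u / a)) u := by
    refine ((hasDerivAt_pow 2 u).fun_neg.div_const (2 * a)).congr_deriv ?_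
    field_simp
    norm_num
  refine (hexponent.exp.const_mul (√(2 * Real.pi * a))⁻¹).congr_deriv ?_
  unfold heatKernelDeriv heatKernel
  ring

theorem hasDerivAt_heatKernelDeriv (ha : a ≠ 0) (u : ℝ) :
    HasDerivAt (heatKernelDeriv a) (heatKernelDeriv₂ a u) u := by
  have hscore : HasDerivAt (fun u ↦ -(u / a)) (-(1 / a)) u :=
    ((hasDerivAt_id u).div_const a).fun_neg
  refine (hscore.mul (hasDerivAt_heatKernel ha u)).congr_deriv ?_
  unfold heatKernelDeriv₂ heatKernelDeriv
  field_simp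
  ring

theorem hasDerivAt_heatKernel_variance (ha : 0 < a) (u : ℝ) :
    HasDerivAt (heatKernel · u) (1 / 2 * heatKernelDeriv₂ a u) a := by
  have hvar : 0 < 2 * Real.pi * a := by positivity
  have hsqrt : √(2 * Real.pi * a) ≠ 0 := (Real.sqrt_pos.2 hvar).ne'
  have hconst := (((hasDerivAt_id a).const_mul (2 * Real.pi)).sqrt hvar.ne').fun_inv hsqrt
  have hexponent := (hasDerivAt_const a (-u ^ 2)).fun_div ((hasDerivAt_id a).const_mul (2 : ℝ))
    (by positivity)
  refine (hconst.mul hexponent.exp).congr_deriv ?_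
  unfold heatKernelDeriv₂ heatKernel
  simp only [id, Real.sq_sqrt hvar.le]
  field_simp
  ring

theorem abs_heatKernel_le_envelope (ha : 0 < a) (u : ℝ) :
    |heatKernel a u| ≤ heatKernelEnvelope a u := by
  have hpos := heatKernel_pos ha u
  rw [abs_of_pos hpos]
  refine le_mul_of_one_le_left hpos.le ?_
  rw [add_assoc, le_add_iff_nonneg_right]
  positivity

theorem abs_heatKernelDeriv_le_envelope (ha : 0 < a) (u : ℝ) :
    |heatKernelDeriv a u| ≤ heatKernelEnvelope a u := by
  have hpos := heatKernel_pos ha u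
  have hinv : 0 < 1 / a := by positivity
  rw [heatKernelDeriv, heatKernelEnvelope, abs_mul, abs_of_pos hpos, ← div_pow]
  gcongr
  rw [abs_le]
  constructor <;> nlinarith [sq_nonneg (u / a - 1), sq_nonneg (u / a + 1)]

theorem abs_heatKernelDeriv₂_le_envelope (ha : 0 < a) (u : ℝ) :
    |heatKernelDeriv₂ a u| ≤ heatKernelEnvelope a u := by
  have hpos := heatKernel_pos ha u
  have hinv : 0 < 1 / a := by positivity
  have hsq : 0 ≤ u ^ 2 / a ^ 2 := by positivity
  rw [heatKernelDeriv₂, heatKernelEnvelope, abs_mul, abs_of_pos hpos]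
  gcongr
  rw [abs_le]
  constructor <;> linarith

theorem heatKernelEnvelope_nonneg (ha : 0 < a) (u : ℝ) : 0 ≤ heatKernelEnvelope a u :=
  (abs_nonneg _).trans (abs_heatKernel_le_envelope ha u)

-- Half of the exponent is set apart, to absorb the quadratic factor of the envelope.
theorem heatKernel_le_mul_heatKernel (ha : 0 < a) (hac : 2 * a ≤ c) (u : ℝ) :
    heatKernel a u ≤ √(c / a) * Real.exp (-(u ^ 2 / (4 * a))) * heatKernel c u := by
  have hc : 0 < c := by linarith
  have hconst : (√(2 * Real.pi * a))⁻¹ = √(c / a) * (√(2 * Real.pi * c))⁻¹ := by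
    rw [← Real.sqrt_inv, ← Real.sqrt_inv, ← Real.sqrt_mul (by positivity)]
    congr 1
    field_simp
  have hexp : Real.exp (-u ^ 2 / (2 * a)) ≤
      Real.exp (-(u ^ 2 / (4 * a))) * Real.exp (-u ^ 2 / (2 * c)) := by
    have hdiv : u ^ 2 / (2 * c) ≤ u ^ 2 / (4 * a) :=
      div_le_div_of_nonneg_left (sq_nonneg u) (by positivity) (by linarith)
    rw [← Real.exp_add, Real.exp_le_exp]
    calc -u ^ 2 / (2 * a) = -(u ^ 2 / (4 * a)) - u ^ 2 / (4 * a) := by field_simp; ring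
      _ ≤ -(u ^ 2 / (4 * a)) + -u ^ 2 / (2 * c) := by rw [neg_div]; linarith
  calc heatKernel a u
      ≤ √(c / a) * (√(2 * Real.pi * c))⁻¹ *
          (Real.exp (-(u ^ 2 / (4 * a))) * Real.exp (-u ^ 2 / (2 * c))) := by
        rw [heatKernel, hconst]
        gcongr
    _ = _ := by rw [heatKernel]; ring

theorem heatKernelEnvelope_le (ha : 0 < a) (hac : 2 * a ≤ c) (u : ℝ) :
    heatKernelEnvelope a u ≤ √(c / a) * (1 + 5 / a) * heatKernel c u := by
  have hpos := heatKernel_pos (show 0 < c by linarith) u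
  set t := u ^ 2 / (4 * a) with ht
  have hexp_le : Real.exp (-t) ≤ 1 := Real.exp_le_one_iff.2 (by rw [neg_nonpos]; positivity)
  have hmul_exp_le : t * Real.exp (-t) ≤ 1 :=
    (Real.mul_exp_neg_le_exp_neg_one t).trans (Real.exp_le_one_iff.2 (by norm_num))
  calc heatKernelEnvelope a u
      ≤ (1 + 1 / a + u ^ 2 / a ^ 2) * (√(c / a) * Real.exp (-t) * heatKernel c u) := by
        rw [heatKernelEnvelope]
        gcongr
        exact heatKernel_le_mul_heatKernel ha hac u
    _ = √(c / a) * ((1 + 1 / a) * Real.exp (-t) + 4 / a * (t * Real.exp (-t))) *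
          heatKernel c u := by rw [ht]; field_simp
    _ ≤ √(c / a) * ((1 + 1 / a) * 1 + 4 / a * 1) * heatKernel c u := by gcongr
    _ = _ := by ring

theorem exists_heatKernelEnvelope_le_mul_heatKernel (hb : 0 < b) :
    ∃ C, 0 ≤ C ∧ ∀ a ∈ Set.Icc (b / 2) (2 * b), ∀ u,
      heatKernelEnvelope a u ≤ C * heatKernel (4 * b) u := by
  refine ⟨√(4 * b / (b / 2)) * (1 + 5 / (b / 2)), by positivity, fun a ha u ↦ ?_⟩
  have ha₀ : 0 < a := by linarith [ha.1]
  have hpos := heatKernel_pos (show 0 < 4 * b by linarith) u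
  have hac : 2 * a ≤ 4 * b := by linarith [ha.2]
  refine (heatKernelEnvelope_le ha₀ hac u).trans ?_
  have hba := ha.1
  gcongr

theorem exists_heatKernelEnvelope_le_of_mem_Icc (hb : 0 < b) :
    ∃ C, ∀ a ∈ Set.Icc (b / 2) (2 * b), ∀ u, heatKernelEnvelope a u ≤ C := by
  obtain ⟨C, hC, hle⟩ := exists_heatKernelEnvelope_le_mul_heatKernel hb
  exact ⟨C * (√(2 * Real.pi * (4 * b)))⁻¹, fun a ha u ↦ (hle a ha u).trans
    (mul_le_mul_of_nonneg_left (heatKernel_le (by linarith) u) hC)⟩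

theorem exists_heatKernelEnvelope_le (ha : 0 < a) : ∃ C, ∀ u, heatKernelEnvelope a u ≤ C := by
  obtain ⟨C, hC⟩ := exists_heatKernelEnvelope_le_of_mem_Icc ha
  exact ⟨C, hC a ⟨by linarith, by linarith⟩⟩

theorem integrable_sq_mul_heatKernel (ha : 0 < a) : Integrable fun u ↦ u ^ 2 * heatKernel a u := by
  have hmajorant := ((integrable_heatKernel (show 0 < 2 * a by linarith)).const_mul
    (√(2 * a / a) * (1 + 5 / a))).const_mul (a ^ 2)
  refine hmajorant.mono' (by fun_prop) (ae_of_all _ fun u ↦ ?_)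
  have hpos := heatKernel_pos ha u
  have hinv : 0 ≤ 1 / a := by positivity
  rw [Real.norm_of_nonneg (by positivity)]
  calc u ^ 2 * heatKernel a u = a ^ 2 * (u ^ 2 / a ^ 2 * heatKernel a u) := by field_simp
    _ ≤ a ^ 2 * heatKernelEnvelope a u := by
        rw [heatKernelEnvelope]
        gcongr
        linarith
    _ ≤ _ := mul_le_mul_of_nonneg_left (heatKernelEnvelope_le ha le_rfl u) (sq_nonneg a)

end HeatKernel

section OutputDensity

/-- The output density of the additive Gaussian noise channel: the density of `X + √a·W`, where
`X` has law `μ`. -/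
noncomputable def outputDensity (μ : Measure ℝ) (a : ℝ) : ℝ → ℝ :=
  measureConv μ (heatKernel a)

section IsFiniteMeasure

variable (μ : Measure ℝ) [IsFiniteMeasure μ] {g : ℝ → ℝ} {a b : ℝ}

theorem integrable_sub_of_le_heatKernelEnvelope (ha : 0 < a) (hg : Continuous g)
    (hle : ∀ u, |g u| ≤ heatKernelEnvelope a u) (y : ℝ) : Integrable (fun x ↦ g (y - x)) μ := by
  obtain ⟨C, hC⟩ := exists_heatKernelEnvelope_le ha
  exact integrable_comp_sub_left_of_bounded hg (fun u ↦ (hle u).trans (hC u)) y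

theorem integrable_heatKernelEnvelope_sub (ha : 0 < a) (y : ℝ) :
    Integrable (fun x ↦ heatKernelEnvelope a (y - x)) μ :=
  integrable_sub_of_le_heatKernelEnvelope μ ha (by fun_prop)
    (fun u ↦ (abs_of_nonneg (heatKernelEnvelope_nonneg ha u)).le) y

theorem abs_measureConv_le_heatKernelEnvelope (ha : 0 < a)
    (hle : ∀ u, |g u| ≤ heatKernelEnvelope a u) (y : ℝ) :
    |measureConv μ g y| ≤ measureConv μ (heatKernelEnvelope a) y :=
  abs_measureConv_le y (integrable_heatKernelEnvelope_sub μ ha y) hle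

theorem abs_measureConv_mul_log_add_one_le (ha : 0 < a)
    (hg : ∀ u, |g u| ≤ heatKernelEnvelope a u) (y : ℝ) :
    |measureConv μ g y * (Real.log (outputDensity μ a y) + 1)| ≤
      measureConv μ (heatKernelEnvelope a) y * (|Real.log (outputDensity μ a y)| + 1) := by
  have hconv := abs_measureConv_le_heatKernelEnvelope μ ha hg y
  rw [abs_mul]
  gcongr
  · exact (abs_nonneg _).trans hconv
  · simpa using abs_add_le (Real.log (outputDensity μ a y)) 1

theorem continuous_measureConv_heatKernelDeriv₂ (ha : 0 < a) :
    Continuous (measureConv μ (heatKernelDeriv₂ a)) := by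
  obtain ⟨C, hC⟩ := exists_heatKernelEnvelope_le ha
  exact continuous_measureConv (by fun_prop) fun u ↦
    (abs_heatKernelDeriv₂_le_envelope ha u).trans (hC u)

theorem hasDerivAt_outputDensity (ha : 0 < a) (y : ℝ) :
    HasDerivAt (outputDensity μ a) (measureConv μ (heatKernelDeriv a) y) y := by
  obtain ⟨C, hC⟩ := exists_heatKernelEnvelope_le ha
  exact hasDerivAt_measureConv (hasDerivAt_heatKernel ha.ne') (by fun_prop)
    (fun u ↦ (abs_heatKernel_le_envelope ha u).trans (hC u))
    (fun u ↦ (abs_heatKernelDeriv_le_envelope ha u).trans (hC u)) y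

theorem continuous_outputDensity (ha : 0 < a) : Continuous (outputDensity μ a) :=
  continuous_iff_continuousAt.2 fun y ↦ (hasDerivAt_outputDensity μ ha y).continuousAt

theorem hasDerivAt_measureConv_heatKernelDeriv (ha : 0 < a) (y : ℝ) :
    HasDerivAt (measureConv μ (heatKernelDeriv a)) (measureConv μ (heatKernelDeriv₂ a) y) y := by
  obtain ⟨C, hC⟩ := exists_heatKernelEnvelope_le ha
  exact hasDerivAt_measureConv (hasDerivAt_heatKernelDeriv ha.ne') (by fun_prop)
    (fun u ↦ (abs_heatKernelDeriv_le_envelope ha u).trans (hC u))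
    (fun u ↦ (abs_heatKernelDeriv₂_le_envelope ha u).trans (hC u)) y

theorem continuous_measureConv_heatKernelDeriv (ha : 0 < a) :
    Continuous (measureConv μ (heatKernelDeriv a)) :=
  continuous_iff_continuousAt.2 fun y ↦
    (hasDerivAt_measureConv_heatKernelDeriv μ ha y).continuousAt

theorem hasDerivAt_outputDensity_variance (hb : 0 < b) (y : ℝ) :
    HasDerivAt (outputDensity μ · y) (1 / 2 * measureConv μ (heatKernelDeriv₂ b) y) b := by
  obtain ⟨C, hC⟩ := exists_heatKernelEnvelope_le_of_mem_Icc hb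
  have hpos : ∀ a ∈ Set.Icc (b / 2) (2 * b), 0 < a := fun a ha ↦ by linarith [ha.1]
  have hnhds : Set.Icc (b / 2) (2 * b) ∈ nhds b := Icc_mem_nhds (by linarith) (by linarith)
  rw [measureConv, ← integral_const_mul]
  refine hasDerivAt_measureConv_param (g' := fun a u ↦ 1 / 2 * heatKernelDeriv₂ a u) hnhds
    (fun a _ ↦ by fun_prop) (by fun_prop)
    (fun a ha ↦ hasDerivAt_heatKernel_variance (hpos a ha))
    (fun u ↦ (abs_heatKernel_le_envelope hb u).trans (hC b (mem_of_mem_nhds hnhds) u))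
    (C' := 1 / 2 * C) (fun a ha u ↦ ?_) y
  rw [abs_mul, abs_of_pos one_half_pos]
  gcongr
  exact (abs_heatKernelDeriv₂_le_envelope (hpos a ha) u).trans (hC a ha u)

-- The quadratic `l ↦ ∫ (u / a + l) ^ 2 * heatKernel a u` is nonnegative, so its discriminant is not
-- positive: this is the Cauchy–Schwarz inequality.
theorem sq_measureConv_heatKernelDeriv_le (ha : 0 < a) (y : ℝ) :
    measureConv μ (heatKernelDeriv a) y ^ 2 ≤
      outputDensity μ a y * measureConv μ (heatKernelEnvelope a) y := by
  have hi₀ := integrable_sub_of_le_heatKernelEnvelope μ ha (by fun_prop)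
    (abs_heatKernel_le_envelope ha) y
  have hi₁ := integrable_sub_of_le_heatKernelEnvelope μ ha (by fun_prop)
    (abs_heatKernelDeriv_le_envelope ha) y
  have hienv := integrable_heatKernelEnvelope_sub μ ha y
  have hquad : ∀ l : ℝ, 0 ≤ outputDensity μ a y * (l * l) +
      -2 * measureConv μ (heatKernelDeriv a) y * l + measureConv μ (heatKernelEnvelope a) y := by
    intro l
    have hkernel : ∀ u, 0 ≤ heatKernel a u * (l * l) + -2 * heatKernelDeriv a u * l +
        heatKernelEnvelope a u := fun u ↦ by
      have hpos := heatKernel_pos ha u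
      calc 0 ≤ ((u / a + l) ^ 2 + (1 + 1 / a)) * heatKernel a u := by positivity
        _ = _ := by rw [heatKernelDeriv, heatKernelEnvelope]; ring
    have hint := integral_nonneg_of_ae (ae_of_all μ fun x ↦ hkernel (y - x))
    have hlinear : Integrable (fun x ↦ heatKernel a (y - x) * (l * l) +
        -2 * heatKernelDeriv a (y - x) * l) μ :=
      (hi₀.mul_const _).add ((hi₁.const_mul _).mul_const _)
    rwa [integral_add hlinear hienv,
      integral_add (hi₀.mul_const _) ((hi₁.const_mul _).mul_const _), integral_mul_const,
      integral_mul_const, integral_const_mul] at hint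
  have hdiscrim := discrim_le_zero hquad
  rw [discrim] at hdiscrim
  linarith

theorem outputDensity_pos [NeZero μ] (ha : 0 < a) (y : ℝ) : 0 < outputDensity μ a y := by
  have hi := integrable_sub_of_le_heatKernelEnvelope μ ha (by fun_prop)
    (abs_heatKernel_le_envelope ha) y
  have hsupport : Function.support (fun x ↦ heatKernel a (y - x)) = Set.univ :=
    Set.eq_univ_of_forall fun x ↦ (heatKernel_pos ha (y - x)).ne'
  rw [outputDensity, measureConv,
    integral_pos_iff_support_of_nonneg (fun x ↦ (heatKernel_pos ha (y - x)).le) hi, hsupport]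
  exact (NeZero.ne (μ Set.univ)).bot_lt

theorem integrable_one_add_sq_mul_outputDensity (hμ : Integrable (fun x ↦ x ^ 2) μ) (ha : 0 < a) :
    Integrable fun y ↦ (1 + y ^ 2) * outputDensity μ a y :=
  integrable_one_add_sq_mul_measureConv hμ (fun u ↦ (heatKernel_pos ha u).le)
    (integrable_heatKernel ha) (integrable_sq_mul_heatKernel ha)

theorem exists_measureConv_heatKernelEnvelope_le (hb : 0 < b) :
    ∃ C, 0 ≤ C ∧ ∀ a ∈ Set.Icc (b / 2) (2 * b), ∀ y,
      measureConv μ (heatKernelEnvelope a) y ≤ C * outputDensity μ (4 * b) y := by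
  obtain ⟨C, hC, hle⟩ := exists_heatKernelEnvelope_le_mul_heatKernel hb
  refine ⟨C, hC, fun a ha y ↦ ?_⟩
  have ha₀ : 0 < a := by linarith [ha.1]
  have hb₄ : 0 < 4 * b := by linarith
  rw [outputDensity, measureConv, measureConv, ← integral_const_mul]
  exact integral_mono (integrable_heatKernelEnvelope_sub μ ha₀ y)
    ((integrable_sub_of_le_heatKernelEnvelope μ hb₄ (by fun_prop)
      (abs_heatKernel_le_envelope hb₄) y).const_mul C) fun x ↦ hle a ha (y - x)

end IsFiniteMeasure

section IsProbabilityMeasure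

variable {μ : Measure ℝ} [IsProbabilityMeasure μ] {a b : ℝ}

theorem outputDensity_le (ha : 0 < a) (y : ℝ) :
    outputDensity μ a y ≤ (√(2 * Real.pi * a))⁻¹ := by
  refine (integral_mono (integrable_sub_of_le_heatKernelEnvelope μ ha (by fun_prop)
    (abs_heatKernel_le_envelope ha) y) (integrable_const _) fun x ↦ heatKernel_le ha (y - x)).trans
    (by simp)

-- Jensen's inequality for `exp`, applied to the exponent of the heat kernel.
theorem le_outputDensity (hμ : Integrable (fun x ↦ x ^ 2) μ) (ha : 0 < a) (y : ℝ) :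
    (√(2 * Real.pi * a))⁻¹ * Real.exp (-((y ^ 2 + ∫ x, x ^ 2 ∂μ) / a)) ≤ outputDensity μ a y := by
  have hexponent_le : ∀ x, (y - x) ^ 2 / (2 * a) ≤ (y ^ 2 + x ^ 2) / a := fun x ↦ by
    rw [div_le_div_iff₀ (by positivity) ha]
    nlinarith [mul_nonneg ha.le (sq_nonneg (y + x))]
  have hmajorant : Integrable (fun x ↦ (y ^ 2 + x ^ 2) / a) μ :=
    ((integrable_const _).add hμ).div_const a
  have hexponent : Integrable (fun x ↦ -(y - x) ^ 2 / (2 * a)) μ := by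
    refine hmajorant.mono' (by fun_prop) (ae_of_all _ fun x ↦ ?_)
    rw [neg_div, norm_neg, Real.norm_of_nonneg (by positivity)]
    exact hexponent_le x
  have hexp : Integrable (fun x ↦ Real.exp (-(y - x) ^ 2 / (2 * a))) μ := by
    refine .of_bound (by fun_prop) 1 (ae_of_all _ fun x ↦ ?_)
    rw [Real.norm_of_nonneg (Real.exp_nonneg _), Real.exp_le_one_iff, neg_div, neg_nonpos]
    positivity
  have hmean : -((y ^ 2 + ∫ x, x ^ 2 ∂μ) / a) ≤ ∫ x, -(y - x) ^ 2 / (2 * a) ∂μ := by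
    calc -((y ^ 2 + ∫ x, x ^ 2 ∂μ) / a) = ∫ x, -((y ^ 2 + x ^ 2) / a) ∂μ := by
          rw [integral_neg, integral_div, integral_add (integrable_const _) hμ]
          simp
      _ ≤ _ := integral_mono hmajorant.neg hexponent fun x ↦ by
          rw [neg_div, neg_le_neg_iff]
          exact hexponent_le x
  have hjensen := convexOn_exp.map_integral_le Real.continuous_exp.continuousOn isClosed_univ
    (ae_of_all _ fun _ ↦ Set.mem_univ _) hexponent hexp
  simp only [outputDensity, measureConv, heatKernel, integral_const_mul]
  gcongr
  exact (Real.exp_le_exp.2 hmean).trans hjensen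

theorem abs_log_outputDensity_add_le (hμ : Integrable (fun x ↦ x ^ 2) μ) (ha : 0 < a) (y : ℝ) :
    |Real.log (outputDensity μ a y) + Real.log √(2 * Real.pi * a)| ≤
      (y ^ 2 + ∫ x, x ^ 2 ∂μ) / a := by
  have hupper := Real.log_le_log (outputDensity_pos μ ha y) (outputDensity_le ha y)
  have hlower := Real.log_le_log (by positivity) (le_outputDensity hμ ha y)
  rw [Real.log_inv] at hupper
  rw [Real.log_mul (by positivity) (by positivity), Real.log_inv, Real.log_exp] at hlower
  exact abs_le.2 ⟨by linarith, by linarith⟩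

theorem exists_abs_log_outputDensity_le (hμ : Integrable (fun x ↦ x ^ 2) μ) (hb : 0 < b) :
    ∃ L, ∀ a ∈ Set.Icc (b / 2) (2 * b), ∀ y,
      |Real.log (outputDensity μ a y)| ≤ L * (1 + y ^ 2) := by
  have hpos : ∀ a ∈ Set.Icc (b / 2) (2 * b), 0 < a := fun a ha ↦ by linarith [ha.1]
  obtain ⟨M, hM⟩ := isCompact_Icc.exists_bound_of_continuousOn
    (f := fun a ↦ Real.log √(2 * Real.pi * a)) (s := Set.Icc (b / 2) (2 * b))
    (ContinuousOn.log (by fun_prop) fun a ha ↦ by have := hpos a ha; positivity)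
  have hM₀ : 0 ≤ M := (norm_nonneg _).trans (hM b ⟨by linarith, by linarith⟩)
  set m := ∫ x, x ^ 2 ∂μ
  have hm₀ : 0 ≤ m := integral_nonneg fun x ↦ sq_nonneg x
  refine ⟨M + (1 + m) / (b / 2), fun a ha y ↦ ?_⟩
  have hdiv : (y ^ 2 + m) / a ≤ (y ^ 2 + m) / (b / 2) := by gcongr; exact ha.1
  calc |Real.log (outputDensity μ a y)|
      ≤ |Real.log √(2 * Real.pi * a)| +
          |Real.log (outputDensity μ a y) + Real.log √(2 * Real.pi * a)| := by
        simpa using abs_add_le (-Real.log √(2 * Real.pi * a))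
          (Real.log (outputDensity μ a y) + Real.log √(2 * Real.pi * a))
    _ ≤ M + (y ^ 2 + m) / (b / 2) :=
        add_le_add (hM a ha) ((abs_log_outputDensity_add_le hμ (hpos a ha) y).trans hdiv)
    _ ≤ M * (1 + y ^ 2) + (1 + m) * (1 + y ^ 2) / (b / 2) := by
        gcongr <;> nlinarith [sq_nonneg y]
    _ = _ := by ring

theorem exists_measureConv_heatKernelEnvelope_mul_log_le (hμ : Integrable (fun x ↦ x ^ 2) μ)
    (hb : 0 < b) : ∃ C, ∀ a ∈ Set.Icc (b / 2) (2 * b), ∀ y,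
      measureConv μ (heatKernelEnvelope a) y * (|Real.log (outputDensity μ a y)| + 1) ≤
        C * ((1 + y ^ 2) * outputDensity μ (4 * b) y) := by
  obtain ⟨C, hC, henv⟩ := exists_measureConv_heatKernelEnvelope_le μ hb
  obtain ⟨L, hlog⟩ := exists_abs_log_outputDensity_le hμ hb
  refine ⟨C * (L + 1), fun a ha y ↦ ?_⟩
  have hpos := outputDensity_pos μ (show 0 < 4 * b by linarith) y
  calc measureConv μ (heatKernelEnvelope a) y * (|Real.log (outputDensity μ a y)| + 1)
      ≤ C * outputDensity μ (4 * b) y * (L * (1 + y ^ 2) + (1 + y ^ 2)) := by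
        gcongr
        · exact henv a ha y
        · exact hlog a ha y
        · exact le_add_of_nonneg_right (sq_nonneg y)
    _ = _ := by ring

theorem integrable_of_abs_le_measureConv_heatKernelEnvelope_mul_log
    (hμ : Integrable (fun x ↦ x ^ 2) μ) (ha : 0 < a) {v : ℝ → ℝ} (hv : Continuous v)
    (hle : ∀ y, |v y| ≤
      measureConv μ (heatKernelEnvelope a) y * (|Real.log (outputDensity μ a y)| + 1)) :
    Integrable v := by
  obtain ⟨C, hC⟩ := exists_measureConv_heatKernelEnvelope_mul_log_le hμ ha
  exact ((integrable_one_add_sq_mul_outputDensity μ hμ (by linarith)).const_mul C).mono'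
    hv.aestronglyMeasurable
    (ae_of_all _ fun y ↦ (hle y).trans (hC a ⟨by linarith, by linarith⟩ y))

theorem integrable_outputDensity_mul_log (hμ : Integrable (fun x ↦ x ^ 2) μ) (ha : 0 < a) :
    Integrable fun y ↦ outputDensity μ a y * Real.log (outputDensity μ a y) := by
  have hf := continuous_outputDensity μ ha
  refine integrable_of_abs_le_measureConv_heatKernelEnvelope_mul_log hμ ha
    (hf.mul (hf.log fun y ↦ (outputDensity_pos μ ha y).ne')) fun y ↦ ?_
  have hconv := abs_measureConv_le_heatKernelEnvelope μ ha (abs_heatKernel_le_envelope ha) y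
  rw [abs_mul]
  exact mul_le_mul hconv (le_add_of_nonneg_right zero_le_one) (abs_nonneg _)
    ((abs_nonneg _).trans hconv)

theorem integrable_measureConv_mul_log_add_one {g : ℝ → ℝ} (hμ : Integrable (fun x ↦ x ^ 2) μ)
    (ha : 0 < a) (hcont : Continuous (measureConv μ g))
    (hg : ∀ u, |g u| ≤ heatKernelEnvelope a u) :
    Integrable fun y ↦ measureConv μ g y * (Real.log (outputDensity μ a y) + 1) := by
  have hlog := (continuous_outputDensity μ ha).log fun y ↦ (outputDensity_pos μ ha y).ne'
  exact integrable_of_abs_le_measureConv_heatKernelEnvelope_mul_log hμ ha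
    (hcont.mul (hlog.add continuous_const)) (abs_measureConv_mul_log_add_one_le μ ha hg)

theorem integrable_sq_measureConv_heatKernelDeriv_div (hμ : Integrable (fun x ↦ x ^ 2) μ)
    (ha : 0 < a) :
    Integrable fun y ↦ measureConv μ (heatKernelDeriv a) y ^ 2 / outputDensity μ a y := by
  refine integrable_of_abs_le_measureConv_heatKernelEnvelope_mul_log hμ ha
    (((continuous_measureConv_heatKernelDeriv μ ha).pow 2).div (continuous_outputDensity μ ha)
      fun y ↦ (outputDensity_pos μ ha y).ne') fun y ↦ ?_
  have hpos := outputDensity_pos μ ha y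
  have henv : 0 ≤ measureConv μ (heatKernelEnvelope a) y :=
    integral_nonneg fun x ↦ heatKernelEnvelope_nonneg ha (y - x)
  rw [abs_of_nonneg (by positivity)]
  calc measureConv μ (heatKernelDeriv a) y ^ 2 / outputDensity μ a y
      ≤ measureConv μ (heatKernelEnvelope a) y :=
        div_le_of_le_mul₀ hpos.le henv
          ((sq_measureConv_heatKernelDeriv_le μ ha y).trans_eq (mul_comm _ _))
    _ ≤ _ := le_mul_of_one_le_right henv (le_add_of_nonneg_left (abs_nonneg _))

theorem hasDerivAt_differentialEntropy_outputDensity (hμ : Integrable (fun x ↦ x ^ 2) μ)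
    (hb : 0 < b) :
    HasDerivAt (fun a ↦ differentialEntropy (outputDensity μ a))
      (-∫ y, 1 / 2 * measureConv μ (heatKernelDeriv₂ b) y *
        (Real.log (outputDensity μ b y) + 1)) b := by
  obtain ⟨C, hC⟩ := exists_measureConv_heatKernelEnvelope_mul_log_le hμ hb
  have hpos : ∀ a ∈ Set.Icc (b / 2) (2 * b), 0 < a := fun a ha ↦ by linarith [ha.1]
  refine hasDerivAt_differentialEntropy
    (f' := fun a y ↦ 1 / 2 * measureConv μ (heatKernelDeriv₂ a) y)
    (Icc_mem_nhds (by linarith) (by linarith)) (fun a ha ↦ continuous_outputDensity μ (hpos a ha))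
    ((continuous_measureConv_heatKernelDeriv₂ μ hb).const_mul _)
    (fun a ha ↦ outputDensity_pos μ (hpos a ha))
    (fun a ha ↦ hasDerivAt_outputDensity_variance μ (hpos a ha))
    (integrable_outputDensity_mul_log hμ hb)
    ((integrable_one_add_sq_mul_outputDensity μ hμ (by linarith)).const_mul C)
    fun a ha y ↦ le_trans ?_ (hC a ha y)
  refine le_trans ?_ (abs_measureConv_mul_log_add_one_le μ (hpos a ha)
    (abs_heatKernelDeriv₂_le_envelope (hpos a ha)) y)
  rw [mul_assoc, abs_mul, abs_of_pos one_half_pos]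
  exact mul_le_of_le_one_left (abs_nonneg _) one_half_lt_one.le

theorem integral_measureConv_heatKernelDeriv₂_mul_log_add_one (hμ : Integrable (fun x ↦ x ^ 2) μ)
    (ha : 0 < a) :
    ∫ y, measureConv μ (heatKernelDeriv₂ a) y * (Real.log (outputDensity μ a y) + 1) =
      -fisherInformation (outputDensity μ a) :=
  integral_deriv2_mul_log_add_one (outputDensity_pos μ ha) (hasDerivAt_outputDensity μ ha)
    (hasDerivAt_measureConv_heatKernelDeriv μ ha)
    (integrable_measureConv_mul_log_add_one hμ ha (continuous_measureConv_heatKernelDeriv₂ μ ha)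
      (abs_heatKernelDeriv₂_le_envelope ha))
    (integrable_measureConv_mul_log_add_one hμ ha (continuous_measureConv_heatKernelDeriv μ ha)
      (abs_heatKernelDeriv_le_envelope ha))
    (integrable_sq_measureConv_heatKernelDeriv_div hμ ha)

end IsProbabilityMeasure

end OutputDensity

theorem de_bruijn_identity_general (μ : Measure ℝ) [IsProbabilityMeasure μ]
    (hμ : Integrable (fun x ↦ x ^ 2) μ) {a : ℝ} (ha : 0 < a) :
    HasDerivAt (fun a ↦ differentialEntropy (outputDensity μ a))
      (1 / 2 * fisherInformation (outputDensity μ a)) a := by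
  refine (hasDerivAt_differentialEntropy_outputDensity hμ ha).congr_deriv ?_
  simp only [mul_assoc, integral_const_mul]
  rw [integral_measureConv_heatKernelDeriv₂_mul_log_add_one hμ ha]
  ring

section WithDensity

variable {α : Type*} [MeasurableSpace α] {ν : Measure α} {f : α → ℝ}

theorem isProbabilityMeasure_withDensity_ofReal (hf : ∀ x, 0 ≤ f x) (h : ∫ x, f x ∂ν = 1) :
    IsProbabilityMeasure (ν.withDensity fun x ↦ ENNReal.ofReal (f x)) := by
  have hint : Integrable f ν := .of_integral_ne_zero (by simp [h])
  constructor
  rw [withDensity_apply _ .univ, Measure.restrict_univ,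
    ← ofReal_integral_eq_lintegral_ofReal hint (ae_of_all _ hf), h, ENNReal.ofReal_one]

theorem integral_withDensity_ofReal (hf : ∀ x, 0 ≤ f x) (hm : AEMeasurable f ν) (g : α → ℝ) :
    ∫ x, g x ∂ν.withDensity (fun x ↦ ENNReal.ofReal (f x)) = ∫ x, f x * g x ∂ν := by
  rw [integral_withDensity_eq_integral_toReal_smul₀ hm.ennreal_ofReal
    (ae_of_all _ fun _ ↦ ENNReal.ofReal_lt_top)]
  simp only [ENNReal.toReal_ofReal (hf _), smul_eq_mul]

theorem integrable_withDensity_ofReal_iff (hf : ∀ x, 0 ≤ f x) (hm : AEMeasurable f ν)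
    {g : α → ℝ} : Integrable g (ν.withDensity fun x ↦ ENNReal.ofReal (f x)) ↔
      Integrable (fun x ↦ g x * f x) ν := by
  rw [integrable_withDensity_iff_integrable_smul₀' hm.ennreal_ofReal
    (ae_of_all _ fun _ ↦ ENNReal.ofReal_lt_top)]
  simp only [ENNReal.toReal_ofReal (hf _), smul_eq_mul, mul_comm]

end WithDensity

/-- **De Bruijn's identity.** For the additive Gaussian noise channel
`Y = X + √a·W`, the differential entropy `h(a)` is differentiable in `a > 0`
and `d/da h(a) = (1/2) J(a)`, where `J` is the Fisher information of the
output with respect to a location parameter. -/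
theorem de_bruijn_identity
    (fX : ℝ → ℝ)
    (hfX_nonneg : ∀ x, 0 ≤ fX x)
    (hfX_prob : (∫ x, fX x) = 1)
    (hfX_mom : Integrable (fun x => x ^ 2 * fX x))
    (fY : ℝ → ℝ → ℝ)
    (hfY : ∀ a, 0 < a → ∀ y, fY a y =
      ∫ x, fX x * ((Real.sqrt (2 * Real.pi * a))⁻¹ *
        Real.exp (-(y - x) ^ 2 / (2 * a))))
    (h : ℝ → ℝ)
    (hh : ∀ a, 0 < a → h a = -∫ y, fY a y * Real.log (fY a y))
    (J : ℝ → ℝ)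
    (hJ : ∀ a, 0 < a → J a =
      ∫ y, fY a y * (deriv (fun y' => Real.log (fY a y')) y) ^ 2) :
    ∀ a, 0 < a → HasDerivAt h ((1 / 2) * J a) a := by
  intro a ha
  have hm : AEMeasurable fX :=
    (Integrable.of_integral_ne_zero (by simp [hfX_prob])).aestronglyMeasurable.aemeasurable
  have := isProbabilityMeasure_withDensity_ofReal hfX_nonneg hfX_prob
  set μ := volume.withDensity fun x ↦ ENNReal.ofReal (fX x)
  have hμ : Integrable (fun x ↦ x ^ 2) μ :=
    (integrable_withDensity_ofReal_iff hfX_nonneg hm).2 hfX_mom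
  have hf : ∀ b, 0 < b → fY b = outputDensity μ b := fun b hb ↦ funext fun y ↦
    (hfY b hb y).trans (integral_withDensity_ofReal hfX_nonneg hm _).symm
  rw [hJ a ha, hf a ha]
  refine (de_bruijn_identity_general μ hμ ha).congr_of_eventuallyEq ?_
  filter_upwards [lt_mem_nhds ha] with b hb
  rw [hh b hb, hf b hb, differentialEntropy]
end

section
/- (Entropy derivative for gamma noise) Let X be a nonnegative real random variable whose moment generating function exists and whose density is f_X, and let W be an independent Gamma(α,1) random variable with α ≥ 2, i.e. f_W(w) = w^{α−1} e^{−w}/Γ(α) for w ≥ 0. For a > 0 and shape parameter k ≥ 1 let f_{Y_k}(y;a) = ∫ f_X(x) a^{−1/2} g_k((y−x)/√a) dx, where g_k(w) = w^{k−1} e^{−w}/Γ(k) for w ≥ 0, be the output density when the noise has shape k, and write f_Y = f_{Y_α}. Then the differential entropy h(a) = −∫ f_Y(y;a) log f_Y(y;a) dy satisfies d/da h(a) = (1/(2a√a)) · ( √a − E[X] + ∫ f_{Y_{α−1}}(y;a) m(y;a) dy ), where m(y;a) = ∫ x f_X(x) a^{−1/2} g_α((y−x)/√a) dx / f_Y(y;a)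 is the posterior mean of X given Y = y. -/
open MeasureTheory Filter

/-!
Write `F k` for the density of `X + W` with `W` gamma of shape `k` and rate `r = 1 / √a`. Gamma
densities satisfy `∂ F (k + 1) / ∂y = r (F k - F (k + 1))` and
`∂ F k / ∂r = (k / r) (F k - F (k + 1))`, so varying the rate is the same as differentiating the
density of the next shape along the line: `∂ F k / ∂r = (k / r ^ 2) ∂ F (k + 1) / ∂y`. Integrating
this by parts against `log F k + 1` leaves `F (k + 1) / F k` times
`∂ F k / ∂y = r (F (k - 1) - F k)`, and `F (k + 1) y = (r / k) (y - m y) F k y` turns that ratio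
into the posterior mean `m`.
-/

namespace GammaNoise

open ProbabilityTheory Set
open scoped Topology

section Kernel

variable {k r r₁ r₂ u η : ℝ}

lemma gammaPDFReal_of_neg (hu : u < 0) : gammaPDFReal k r u = 0 :=
  if_neg hu.not_ge

lemma gammaPDFReal_of_nonneg (hu : 0 ≤ u) :
    gammaPDFReal k r u = r ^ k / Real.Gamma k * u ^ (k - 1) * Real.exp (-(r * u)) :=
  if_pos hu

lemma inv_mul_gammaPDFReal_div {t : ℝ} (ht : 0 < t) :
    t⁻¹ * gammaPDFReal k 1 (u / t) = gammaPDFReal k t⁻¹ u := by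
  rcases lt_or_ge u 0 with hu | hu
  · rw [gammaPDFReal_of_neg hu, gammaPDFReal_of_neg (div_neg_of_neg_of_pos hu ht), mul_zero]
  · have hpow : t⁻¹ * t⁻¹ ^ (k - 1) = t⁻¹ ^ k := by
      rw [Real.rpow_sub_one (inv_pos.2 ht).ne', mul_div_cancel₀ _ (inv_pos.2 ht).ne']
    rw [gammaPDFReal_of_nonneg hu, gammaPDFReal_of_nonneg (div_nonneg hu ht.le),
      div_eq_inv_mul u, Real.mul_rpow (inv_pos.2 ht).le hu, Real.one_rpow, one_mul, ← hpow]
    ring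

lemma gammaPDFReal_add_one (hk : 0 < k) (hr : r ≠ 0) :
    gammaPDFReal (k + 1) r u = r / k * u * gammaPDFReal k r u := by
  rcases lt_or_ge u 0 with hu | hu
  · simp only [gammaPDFReal_of_neg hu, mul_zero]
  · have hpow : u ^ k = u * u ^ (k - 1) := by
      rw [mul_comm, ← Real.rpow_add_one' hu (by linarith), sub_add_cancel]
    rw [gammaPDFReal_of_nonneg hu, gammaPDFReal_of_nonneg hu, add_sub_cancel_right, hpow,
      Real.rpow_add_one hr, Real.Gamma_add_one hk.ne']
    ring

lemma integrable_gammaPDFReal (hk : 0 < k) (hr : 0 < r) : Integrable (gammaPDFReal k r) := by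
  refine ⟨(stronglyMeasurable_gammaPDFReal k r).aestronglyMeasurable, ?_⟩
  rw [hasFiniteIntegral_iff_ofReal (.of_forall (gammaPDFReal_nonneg hk hr))]
  exact (lintegral_gammaPDF_eq_one hk hr).trans_lt ENNReal.one_lt_top

lemma integral_gammaPDFReal (hk : 0 < k) (hr : 0 < r) : ∫ u, gammaPDFReal k r u = 1 := by
  rw [integral_eq_lintegral_of_nonneg_ae (.of_forall (gammaPDFReal_nonneg hk hr))
    (stronglyMeasurable_gammaPDFReal k r).aestronglyMeasurable]
  exact congrArg ENNReal.toReal (lintegral_gammaPDF_eq_one hk hr)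

lemma integrable_indicator_one_add_abs_mul_exp (hr : 0 < r) :
    Integrable ((Ici 0).indicator fun u => (1 + |u|) * Real.exp (-(r * u))) := by
  have hgamma : ((Ici 0).indicator fun u => (1 + |u|) * Real.exp (-(r * u))) =
      fun u => r⁻¹ * gammaPDFReal 1 r u + r⁻¹ ^ 2 * gammaPDFReal 2 r u := by
    ext u
    rcases lt_or_ge u 0 with hu | hu
    · rw [indicator_of_notMem (notMem_Ici.2 hu), gammaPDFReal_of_neg hu, gammaPDFReal_of_neg hu,
        mul_zero, mul_zero, add_zero]
    · rw [indicator_of_mem (mem_Ici.2 hu), gammaPDFReal_of_nonneg hu, gammaPDFReal_of_nonneg hu,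
        abs_of_nonneg hu, Real.Gamma_one, Real.Gamma_two]
      simp only [sub_self, Real.rpow_zero, Real.rpow_one, Real.rpow_two,
        show (2 : ℝ) - 1 = 1 by norm_num]
      field_simp
  rw [hgamma]
  exact ((integrable_gammaPDFReal one_pos hr).const_mul _).add
    ((integrable_gammaPDFReal two_pos hr).const_mul _)

lemma exists_gammaPDFReal_le_exp (hk : 1 ≤ k) (hη : η < r₁) (hr₁ : 0 < r₁) (r₂ : ℝ) :
    ∃ C, ∀ r ∈ Icc r₁ r₂, ∀ u, gammaPDFReal k r u ≤ C * Real.exp (-(η * u)) := by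
  have : 0 < Real.Gamma k := Real.Gamma_pos_of_pos (zero_lt_one.trans_le hk)
  have hd : 0 < r₁ - η := sub_pos.2 hη
  refine ⟨r₂ ^ k / Real.Gamma k * ((k - 1) / (r₁ - η)) ^ (k - 1), fun r ⟨hr₁r, hrr₂⟩ u => ?_⟩
  have hr : 0 < r := hr₁.trans_le hr₁r
  have hr₂ : 0 < r₂ := hr.trans_le hrr₂
  have hk₀ : 0 ≤ k - 1 := by linarith
  rcases lt_or_ge u 0 with hu | hu
  · rw [gammaPDFReal_of_neg hu]
    positivity
  have hpow : u ^ (k - 1) ≤ ((k - 1) / (r₁ - η)) ^ (k - 1) * Real.exp ((r₁ - η) * u) := by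
    have h := rpow_abs_le_mul_max_exp u hk₀ hd.ne'
    rwa [abs_of_nonneg hu, abs_of_pos hd, max_eq_left (Real.exp_le_exp.2 (by nlinarith))] at h
  calc gammaPDFReal k r u
      = r ^ k / Real.Gamma k * u ^ (k - 1) * Real.exp (-(r * u)) := gammaPDFReal_of_nonneg hu
    _ ≤ r₂ ^ k / Real.Gamma k * (((k - 1) / (r₁ - η)) ^ (k - 1) * Real.exp ((r₁ - η) * u)) *
          Real.exp (-(r₁ * u)) := by gcongr
    _ = r₂ ^ k / Real.Gamma k * ((k - 1) / (r₁ - η)) ^ (k - 1) *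
          (Real.exp ((r₁ - η) * u) * Real.exp (-(r₁ * u))) := by ring
    _ = _ := by rw [← Real.exp_add]; ring_nf

lemma exists_gammaPDFReal_le (hk : 1 ≤ k) (hr₁ : 0 < r₁) (r₂ : ℝ) :
    ∃ C, ∀ r ∈ Icc r₁ r₂, ∀ u, gammaPDFReal k r u ≤ C := by
  simpa using exists_gammaPDFReal_le_exp hk hr₁ hr₁ r₂

lemma hasDerivAt_gammaPDFReal_rate (hk : 0 < k) (hr : r ≠ 0) :
    HasDerivAt (fun r => gammaPDFReal k r u)
      (k / r * (gammaPDFReal k r u - gammaPDFReal (k + 1) r u)) r := by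
  rw [gammaPDFReal_add_one hk hr]
  rcases lt_or_ge u 0 with hu | hu
  · simpa only [gammaPDFReal_of_neg hu, mul_zero, sub_zero] using hasDerivAt_const r (0 : ℝ)
  · simp only [gammaPDFReal_of_nonneg hu]
    have hpow : HasDerivAt (fun r : ℝ => r ^ k) (k * r ^ (k - 1)) r :=
      Real.hasDerivAt_rpow_const (.inl hr)
    have hexp : HasDerivAt (fun r => Real.exp (-(r * u))) (Real.exp (-(r * u)) * (-u)) r :=
      (hasDerivAt_mul_const u).neg.exp
    refine (((hpow.div_const _).mul_const _).mul hexp).congr_deriv ?_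
    rw [Real.rpow_sub_one hr]
    field_simp
    ring

lemma hasDerivWithinAt_gammaPDFReal (hk : 2 ≤ k) (hr : r ≠ 0) (hu : 0 ≤ u) :
    HasDerivWithinAt (gammaPDFReal k r)
      (r * (gammaPDFReal (k - 1) r u - gammaPDFReal k r u)) (Ici 0) u := by
  have hpow : HasDerivAt (fun u : ℝ => u ^ (k - 1)) ((k - 1) * u ^ (k - 1 - 1)) u :=
    Real.hasDerivAt_rpow_const (.inr (by linarith))
  have hexp : HasDerivAt (fun u => Real.exp (-(r * u))) (Real.exp (-(r * u)) * (-r)) u :=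
    (hasDerivAt_const_mul r).neg.exp
  have hΓ : Real.Gamma k = (k - 1) * Real.Gamma (k - 1) := by
    simpa using Real.Gamma_add_one (s := k - 1) (by linarith)
  have hΓpos : 0 < Real.Gamma (k - 1) := Real.Gamma_pos_of_pos (by linarith)
  have hk₁ : k - 1 ≠ 0 := by linarith
  refine HasDerivWithinAt.congr ?_ (fun v hv => gammaPDFReal_of_nonneg hv)
    (gammaPDFReal_of_nonneg hu)
  refine ((hpow.const_mul _).mul hexp).hasDerivWithinAt.congr_deriv ?_
  rw [gammaPDFReal_of_nonneg hu, gammaPDFReal_of_nonneg hu, hΓ, Real.rpow_sub_one hr]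
  field_simp
  ring

lemma hasDerivAt_gammaPDFReal (hk : 2 ≤ k) (hr : r ≠ 0) (hu : u ≠ 0) :
    HasDerivAt (gammaPDFReal k r) (r * (gammaPDFReal (k - 1) r u - gammaPDFReal k r u)) u := by
  rcases hu.lt_or_gt with hneg | hpos
  · rw [gammaPDFReal_of_neg hneg, gammaPDFReal_of_neg hneg, sub_zero, mul_zero]
    refine (hasDerivAt_const u (0 : ℝ)).congr_of_eventuallyEq ?_
    filter_upwards [Iio_mem_nhds hneg] with v hv using gammaPDFReal_of_neg hv
  · exact (hasDerivWithinAt_gammaPDFReal hk hr hpos.le).hasDerivAt (Ici_mem_nhds hpos)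

lemma exists_lipschitzWith_gammaPDFReal (hk : 2 ≤ k) (hr : 0 < r) :
    ∃ C, LipschitzWith C (gammaPDFReal k r) := by
  obtain ⟨A, hA⟩ := exists_gammaPDFReal_le (k := k - 1) (by linarith) hr r
  obtain ⟨B, hB⟩ := exists_gammaPDFReal_le (k := k) (by linarith) hr r
  have hbound : ∀ u ∈ Ici (0 : ℝ),
      ‖r * (gammaPDFReal (k - 1) r u - gammaPDFReal k r u)‖₊ ≤ (r * max A B).toNNReal := by
    intro u _
    rw [← NNReal.coe_le_coe, coe_nnnorm, Real.norm_eq_abs, abs_mul, abs_of_pos hr]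
    refine le_trans ?_ (Real.le_coe_toNNReal _)
    gcongr
    exact abs_sub_le_of_nonneg_of_le (gammaPDFReal_nonneg (by linarith) hr u)
      ((hA r ⟨le_rfl, le_rfl⟩ u).trans (le_max_left A B))
      (gammaPDFReal_nonneg (by linarith) hr u)
      ((hB r ⟨le_rfl, le_rfl⟩ u).trans (le_max_right A B))
  have hLip := (convex_Ici (0 : ℝ)).lipschitzOnWith_of_nnnorm_hasDerivWithin_le
    (fun u hu => hasDerivWithinAt_gammaPDFReal hk hr.ne' hu) hbound
  have hmax : gammaPDFReal k r ∘ (max · 0) = gammaPDFReal k r := by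
    ext u
    rcases lt_or_ge u 0 with hu | hu
    · rw [Function.comp_apply, max_eq_right hu.le, gammaPDFReal_of_neg hu,
        gammaPDFReal_of_nonneg le_rfl, Real.zero_rpow (by linarith), mul_zero, zero_mul]
    · rw [Function.comp_apply, max_eq_left hu]
  have hcomp := hLip.comp (s := univ) (LipschitzWith.id.max_const 0).lipschitzOnWith
    fun u _ => le_max_right u 0
  exact ⟨_, lipschitzOnWith_univ.1 (hmax ▸ hcomp)⟩

end Kernel

lemma exists_abs_mul_log_add_one_le_sqrt (B : ℝ) :
    ∃ C, ∀ x ∈ Icc 0 B, |x * (Real.log x + 1)| ≤ C * √x := by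
  have hcont : Continuous fun t : ℝ => 2 * (t * Real.log t) + t := by
    have := Real.continuous_mul_log
    fun_prop
  obtain ⟨C, hC⟩ := isCompact_Icc.exists_bound_of_continuousOn
    (s := Icc 0 √B) hcont.continuousOn
  refine ⟨C, fun x ⟨hx₀, hxB⟩ => ?_⟩
  have hfactor : x * (Real.log x + 1) = (2 * (√x * Real.log √x) + √x) * √x := by
    rw [Real.log_sqrt hx₀]
    linear_combination -(Real.log x + 1) * Real.mul_self_sqrt hx₀
  rw [hfactor, abs_mul, abs_of_nonneg (Real.sqrt_nonneg x)]
  gcongr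
  exact hC _ ⟨Real.sqrt_nonneg x, Real.sqrt_le_sqrt hxB⟩

/-- The density of `X + W` when `X` has density `f` and `W` is independent with the Gamma law of
shape `k` and rate `r`; the output density `f_{Y_k}(·; a)` is the case `r = 1 / √a`. -/
noncomputable def gammaConv (f : ℝ → ℝ) (k r y : ℝ) : ℝ :=
  ∫ x, f x * gammaPDFReal k r (y - x)

/-- The conditional mean of `X` given `X + W = y`, for `X` with density `f` and `W` independent with
the Gamma law of shape `k` and rate `r`; it is `0` where the density of `X + W` vanishes. -/
noncomputable def posteriorMean (f : ℝ → ℝ) (k r y : ℝ) : ℝ :=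
  gammaConv (fun x => x * f x) k r y / gammaConv f k r y

section Convolution

variable {f : ℝ → ℝ} {k r r₁ r₂ y c : ℝ}

lemma gammaConv_eq_convolution :
    gammaConv f k r = convolution f (gammaPDFReal k r) (ContinuousLinearMap.mul ℝ ℝ) volume :=
  rfl

lemma integrable_gammaConv (hf : Integrable f) (hk : 0 < k) (hr : 0 < r) :
    Integrable (gammaConv f k r) := by
  rw [gammaConv_eq_convolution]
  exact hf.integrable_convolution _ (integrable_gammaPDFReal hk hr)

lemma aestronglyMeasurable_log_gammaConv_add_one (hf : Integrable f) (hk : 0 < k)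
    (hr : 0 < r) :
    AEStronglyMeasurable fun y => Real.log (gammaConv f k r y) + 1 :=
  ((integrable_gammaConv hf hk hr).aemeasurable.log.add_const 1).aestronglyMeasurable

lemma integral_gammaConv (hf : Integrable f) (hk : 0 < k) (hr : 0 < r) :
    ∫ y, gammaConv f k r y = ∫ x, f x := by
  rw [gammaConv_eq_convolution, integral_convolution _ hf (integrable_gammaPDFReal hk hr),
    integral_gammaPDFReal hk hr, ContinuousLinearMap.mul_apply', mul_one]

lemma integrable_mul_gammaPDFReal_sub (hf : Integrable f) (hk : 1 ≤ k) (hr : 0 < r) (y : ℝ) :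
    Integrable fun x => f x * gammaPDFReal k r (y - x) := by
  obtain ⟨C, hC⟩ := exists_gammaPDFReal_le hk hr r
  refine hf.mul_bdd (c := C)
    (by fun_prop : Measurable fun x => gammaPDFReal k r (y - x)).aestronglyMeasurable
    (.of_forall fun x => ?_)
  rw [Real.norm_of_nonneg (gammaPDFReal_nonneg (by linarith) hr _)]
  exact hC r ⟨le_rfl, le_rfl⟩ _

lemma gammaConv_nonneg (hf : ∀ x, 0 ≤ f x) (hk : 0 < k) (hr : 0 < r) (y : ℝ) :
    0 ≤ gammaConv f k r y :=
  integral_nonneg fun x => mul_nonneg (hf x) (gammaPDFReal_nonneg hk hr _)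

lemma gammaConv_eq_zero_of_le (hc : ∀ᵐ x, x < c → f x = 0) (hy : y ≤ c) :
    gammaConv f k r y = 0 := by
  refine integral_eq_zero_of_ae ?_
  filter_upwards [hc, volume.ae_ne y] with x hx hxy
  rcases hxy.lt_or_gt with h | h
  · simp only [hx (h.trans_le hy), zero_mul, Pi.zero_apply]
  · simp only [gammaPDFReal_of_neg (sub_neg.2 h), mul_zero, Pi.zero_apply]

lemma ae_eq_zero_of_gammaConv_eq_zero (hf : ∀ x, 0 ≤ f x) (hint : Integrable f) (hk : 1 ≤ k)
    (hr : 0 < r) (hy : gammaConv f k r y = 0) : ∀ᵐ x, x < y → f x = 0 := by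
  have hk₀ : 0 < k := by linarith
  have hzero := (integral_eq_zero_iff_of_nonneg
    (fun x => mul_nonneg (hf x) (gammaPDFReal_nonneg hk₀ hr (y - x)))
    (integrable_mul_gammaPDFReal_sub hint hk hr y)).1 hy
  filter_upwards [hzero] with x hx hxy
  exact (mul_eq_zero.1 hx).resolve_right (gammaPDFReal_pos hk₀ hr (sub_pos.2 hxy)).ne'

lemma gammaConv_add_one (hf : Integrable f) (hxf : Integrable fun x => x * f x) (hk : 1 ≤ k)
    (hr : 0 < r) (y : ℝ) :
    gammaConv f (k + 1) r y =
      r / k * (y * gammaConv f k r y - gammaConv (fun x => x * f x) k r y) := by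
  unfold gammaConv
  rw [← integral_const_mul, ← integral_sub
    ((integrable_mul_gammaPDFReal_sub hf hk hr y).const_mul _)
    (integrable_mul_gammaPDFReal_sub hxf hk hr y), ← integral_const_mul]
  congr with x
  rw [gammaPDFReal_add_one (by linarith) hr.ne']
  ring

lemma mul_gammaConv (hf : Integrable f) (hxf : Integrable fun x => x * f x) (hk : 1 ≤ k)
    (hr : 0 < r) (y : ℝ) :
    y * gammaConv f k r y =
      k / r * gammaConv f (k + 1) r y + gammaConv (fun x => x * f x) k r y := by
  rw [gammaConv_add_one hf hxf hk hr]
  field_simp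
  ring

lemma gammaConv_add_one_le (hf : ∀ x, 0 ≤ f x) (hint : Integrable f)
    (hc : ∀ᵐ x, x < c → f x = 0) (hk : 1 ≤ k) (hr : 0 < r) (y : ℝ) :
    gammaConv f (k + 1) r y ≤ r / k * (y - c) * gammaConv f k r y := by
  have hk₀ : 0 < k := by linarith
  unfold gammaConv
  rw [← integral_const_mul]
  refine integral_mono_ae (integrable_mul_gammaPDFReal_sub hint (by linarith) hr y)
    ((integrable_mul_gammaPDFReal_sub hint hk hr y).const_mul _) ?_
  filter_upwards [hc] with x hx
  rcases lt_or_ge x c with h | h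
  · simp only [hx h, zero_mul, mul_zero, le_refl]
  · have hp := mul_nonneg (hf x) (gammaPDFReal_nonneg hk₀ hr (y - x))
    calc f x * gammaPDFReal (k + 1) r (y - x)
        = r / k * (y - x) * (f x * gammaPDFReal k r (y - x)) := by
          rw [gammaPDFReal_add_one hk₀ hr.ne']
          ring
      _ ≤ r / k * (y - c) * (f x * gammaPDFReal k r (y - x)) := by gcongr

lemma abs_gammaConv_add_one_mul_le (hf : ∀ x, 0 ≤ f x) (hint : Integrable f)
    (hc : ∀ᵐ x, x < c → f x = 0) (hk : 1 ≤ k) (hr : 0 < r) (y L : ℝ) :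
    |gammaConv f (k + 1) r y * L| ≤ r / k * |y - c| * |gammaConv f k r y * L| := by
  have hk₀ : 0 < k := by linarith
  have hF := gammaConv_nonneg hf hk₀ hr y
  rw [abs_mul, abs_mul, abs_of_nonneg hF, ← mul_assoc,
    abs_of_nonneg (gammaConv_nonneg hf (by linarith) hr y)]
  refine mul_le_mul_of_nonneg_right ?_ (abs_nonneg L)
  calc gammaConv f (k + 1) r y
      ≤ r / k * (y - c) * gammaConv f k r y := gammaConv_add_one_le hf hint hc hk hr y
    _ ≤ r / k * |y - c| * gammaConv f k r y := by
        gcongr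
        exact le_abs_self _

lemma integrable_mul_gammaConv (hf : Integrable f)
    (hxf : Integrable fun x => x * f x) (hk : 1 ≤ k) (hr : 0 < r) :
    Integrable fun y => y * gammaConv f k r y := by
  have hk₀ : 0 < k := by linarith
  simp only [mul_gammaConv hf hxf hk hr]
  exact ((integrable_gammaConv hf (by linarith) hr).const_mul _).add
    (integrable_gammaConv hxf hk₀ hr)

lemma integral_mul_gammaConv (hf : Integrable f) (hxf : Integrable fun x => x * f x)
    (hk : 1 ≤ k) (hr : 0 < r) :
    ∫ y, y * gammaConv f k r y = (∫ x, x * f x) + k / r * ∫ x, f x := by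
  have hk₀ : 0 < k := by linarith
  have hk₁ : 0 < k + 1 := by linarith
  simp only [mul_gammaConv hf hxf hk hr]
  rw [integral_add ((integrable_gammaConv hf hk₁ hr).const_mul _)
    (integrable_gammaConv hxf hk₀ hr), integral_const_mul,
    integral_gammaConv hf hk₁ hr, integral_gammaConv hxf hk₀ hr,
    add_comm]

lemma hasDerivAt_gammaConv (hf : Integrable f) (hk : 2 ≤ k) (hr : 0 < r) (y : ℝ) :
    HasDerivAt (gammaConv f k r) (r * (gammaConv f (k - 1) r y - gammaConv f k r y)) y := by
  obtain ⟨C, hC⟩ := exists_lipschitzWith_gammaPDFReal hk hr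
  have hint (z : ℝ) := integrable_mul_gammaPDFReal_sub hf (show 1 ≤ k by linarith) hr z
  have hint' := integrable_mul_gammaPDFReal_sub hf (show 1 ≤ k - 1 by linarith) hr y
  have hderiv : r * (gammaConv f (k - 1) r y - gammaConv f k r y) =
      ∫ x, r * (f x * gammaPDFReal (k - 1) r (y - x) - f x * gammaPDFReal k r (y - x)) := by
    rw [integral_const_mul, integral_sub hint' (hint y)]
    rfl
  rw [hderiv]
  refine (hasDerivAt_integral_of_dominated_loc_of_lip
    (F := fun y x => f x * gammaPDFReal k r (y - x))
    (F' := fun x => r * (f x * gammaPDFReal (k - 1) r (y - x) - f x * gammaPDFReal k r (y - x)))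
    (bound := fun x => f x * C)
    univ_mem (.of_forall fun z => (hint z).aestronglyMeasurable) (hint y)
    ((hint'.sub (hint y)).const_mul r).aestronglyMeasurable (.of_forall fun x => ?_)
    (hf.mul_const _) ?_).2
  · refine LipschitzOnWith.of_dist_le_mul fun u _ v _ => ?_
    have hdist := hC.dist_le_mul (u - x) (v - x)
    rw [dist_sub_right] at hdist
    rw [Real.dist_eq, ← mul_sub, abs_mul, Real.coe_nnabs, abs_mul, NNReal.abs_eq, mul_assoc]
    gcongr
    exact hdist
  · filter_upwards [volume.ae_ne y] with x hx
    have hkernel := hasDerivAt_gammaPDFReal hk hr.ne' (sub_ne_zero.2 hx.symm)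
    exact ((hkernel.comp_sub_const y x).const_mul (f x)).congr_deriv (by ring)

lemma hasDerivAt_gammaConv_rate (hf : Integrable f) (hk : 1 ≤ k) (hr : 0 < r) (y : ℝ) :
    HasDerivAt (fun r => gammaConv f k r y)
      (k / r * (gammaConv f k r y - gammaConv f (k + 1) r y)) r := by
  have hk₀ : 0 < k := by linarith
  have hk' : 1 ≤ k + 1 := by linarith
  obtain ⟨A, hA⟩ := exists_gammaPDFReal_le hk (half_pos hr) (2 * r)
  obtain ⟨B, hB⟩ := exists_gammaPDFReal_le hk' (half_pos hr) (2 * r)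
  have hint {s : ℝ} (hs : 0 < s) := integrable_mul_gammaPDFReal_sub hf hk hs y
  have hint' := integrable_mul_gammaPDFReal_sub hf hk' hr y
  have hderiv : k / r * (gammaConv f k r y - gammaConv f (k + 1) r y) =
      ∫ x, k / r * (f x * gammaPDFReal k r (y - x) - f x * gammaPDFReal (k + 1) r (y - x)) := by
    rw [integral_const_mul, integral_sub (hint hr) hint']
    rfl
  have hpos {s : ℝ} (hs : s ∈ Icc (r / 2) (2 * r)) : 0 < s := (half_pos hr).trans_le hs.1
  have hnhds : Icc (r / 2) (2 * r) ∈ 𝓝 r := Icc_mem_nhds (by linarith) (by linarith)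
  rw [hderiv]
  refine (hasDerivAt_integral_of_dominated_loc_of_deriv_le
    (F := fun s x => f x * gammaPDFReal k s (y - x))
    (F' := fun s x =>
      k / s * (f x * gammaPDFReal k s (y - x) - f x * gammaPDFReal (k + 1) s (y - x)))
    (bound := fun x => k / (r / 2) * (|f x| * max A B)) hnhds ?_ (hint hr)
    (((hint hr).sub hint').const_mul _).aestronglyMeasurable (.of_forall fun x s hs => ?_)
    ((hf.abs.mul_const _).const_mul _) (.of_forall fun x s hs => ?_)).2
  · filter_upwards [hnhds] with s hs using (hint (hpos hs)).aestronglyMeasurable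
  · have hs₀ := hpos hs
    rw [← mul_sub, Real.norm_eq_abs, abs_mul, abs_mul, abs_of_pos (div_pos hk₀ hs₀)]
    gcongr
    · exact hs.1
    · exact abs_sub_le_of_nonneg_of_le (gammaPDFReal_nonneg hk₀ hs₀ _)
        ((hA s hs _).trans (le_max_left A B)) (gammaPDFReal_nonneg (by linarith) hs₀ _)
        ((hB s hs _).trans (le_max_right A B))
  · have hkernel := hasDerivAt_gammaPDFReal_rate (u := y - x) hk₀ (hpos hs).ne'
    exact (hkernel.const_mul (f x)).congr_deriv (by ring)

lemma hasDerivAt_gammaConv_add_one_mul_log_add_one (hf : ∀ x, 0 ≤ f x) (hint : Integrable f)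
    (hxf : Integrable fun x => x * f x) (hk : 2 ≤ k) (hr : 0 < r) (y : ℝ) :
    HasDerivAt (fun y => gammaConv f (k + 1) r y * (Real.log (gammaConv f k r y) + 1))
      (r * ((gammaConv f k r y - gammaConv f (k + 1) r y) * (Real.log (gammaConv f k r y) + 1) +
        r / k * (y * gammaConv f (k - 1) r y -
          gammaConv f (k - 1) r y * posteriorMean f k r y) -
        gammaConv f (k + 1) r y)) y := by
  have hk₁ : 1 ≤ k := by linarith
  have hderiv := hasDerivAt_gammaConv hint hk hr y
  by_cases hzero : gammaConv f k r y = 0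
  · -- As `f` vanishes below `y`, the product is `O(z - y)` times a factor tending to `0`.
    have hvanish := ae_eq_zero_of_gammaConv_eq_zero hf hint hk₁ hr hzero
    have hfactor : Tendsto (fun z => gammaConv f k r z * (Real.log (gammaConv f k r z) + 1))
        (𝓝 y) (𝓝 0) := by
      have hlog := Real.continuous_mul_log.continuousAt.comp hderiv.continuousAt
      simpa [hzero, Function.comp_def, mul_add] using
        hlog.tendsto.add hderiv.continuousAt.tendsto
    simp only [gammaConv_eq_zero_of_le hvanish le_rfl, zero_mul, mul_zero, sub_zero, add_zero]
    rw [hasDerivAt_iff_isLittleO]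
    simp only [gammaConv_eq_zero_of_le hvanish le_rfl, zero_mul, sub_zero, smul_zero]
    have hlittle := (Asymptotics.isBigO_refl (fun z => z - y) (𝓝 y)).mul_isLittleO
      ((Asymptotics.isLittleO_one_iff ℝ).2 hfactor)
    simp only [mul_one] at hlittle
    refine (Asymptotics.IsBigO.of_bound (r / k) (.of_forall fun z => ?_)).trans_isLittleO hlittle
    rw [Real.norm_eq_abs, norm_mul, ← mul_assoc]
    exact abs_gammaConv_add_one_mul_le hf hint hvanish hk₁ hr z _
  · have hsucc := hasDerivAt_gammaConv (k := k + 1) hint (by linarith) hr y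
    refine (hsucc.mul ((hderiv.log hzero).add_const 1)).congr_deriv ?_
    rw [add_sub_cancel_right, posteriorMean, gammaConv_add_one hint hxf hk₁ hr]
    field_simp
    ring

lemma hasDerivAt_gammaConv_mul_log_rate (hf : ∀ x, 0 ≤ f x) (hint : Integrable f)
    (hk : 1 ≤ k) (hr : 0 < r) (y : ℝ) :
    HasDerivAt (fun r => gammaConv f k r y * Real.log (gammaConv f k r y))
      (k / r * ((gammaConv f k r y - gammaConv f (k + 1) r y) *
        (Real.log (gammaConv f k r y) + 1))) r := by
  by_cases hzero : gammaConv f k r y = 0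
  · have hvanish := ae_eq_zero_of_gammaConv_eq_zero hf hint hk hr hzero
    simpa only [gammaConv_eq_zero_of_le hvanish le_rfl, zero_mul, sub_zero, mul_zero]
      using hasDerivAt_const r (0 : ℝ)
  · refine ((Real.hasDerivAt_mul_log hzero).comp r
      (hasDerivAt_gammaConv_rate hint hk hr y)).congr_deriv ?_
    ring

lemma exists_gammaConv_le_exp {η : ℝ} (hf : ∀ x, 0 ≤ f x) (hint : Integrable f)
    (hexp : Integrable fun x => Real.exp (η * x) * f x) (hk : 1 ≤ k) (hη : η < r₁) (hr₁ : 0 < r₁)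
    (r₂ : ℝ) :
    ∃ A, ∀ r ∈ Icc r₁ r₂, ∀ y, gammaConv f k r y ≤ A * Real.exp (-(η * y)) := by
  obtain ⟨C, hC⟩ := exists_gammaPDFReal_le_exp hk hη hr₁ r₂
  refine ⟨C * ∫ x, Real.exp (η * x) * f x, fun r hr y => ?_⟩
  calc gammaConv f k r y
      ≤ ∫ x, C * Real.exp (-(η * y)) * (Real.exp (η * x) * f x) := by
        refine integral_mono
          (integrable_mul_gammaPDFReal_sub hint hk (hr₁.trans_le hr.1) y)
          (hexp.const_mul _) fun x => ?_
        calc f x * gammaPDFReal k r (y - x)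
            ≤ f x * (C * Real.exp (-(η * (y - x)))) :=
              mul_le_mul_of_nonneg_left (hC r hr _) (hf x)
          _ = f x * (C * (Real.exp (-(η * y)) * Real.exp (η * x))) := by
              rw [← Real.exp_add]
              ring_nf
          _ = C * Real.exp (-(η * y)) * (Real.exp (η * x) * f x) := by ring
    _ = C * (∫ x, Real.exp (η * x) * f x) * Real.exp (-(η * y)) := by
        rw [integral_const_mul]
        ring

end Convolution

/-- `f` is an unnormalised density of a nonnegative random variable having a finite exponential
moment of some positive order; every output density it generates then decays exponentially. -/
structure IsLightTailed (f : ℝ → ℝ) : Prop where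
  nonneg : ∀ x, 0 ≤ f x
  eq_zero_of_neg : ∀ x < 0, f x = 0
  exists_integrable_exp : ∃ δ > 0, Integrable fun x => Real.exp (δ * x) * f x

namespace IsLightTailed

variable {f : ℝ → ℝ} {k r r₁ y δ η : ℝ}

lemma integrable_exp_of_le (hf : IsLightTailed f)
    (hδ : Integrable fun x => Real.exp (δ * x) * f x) (hηδ : η ≤ δ) :
    Integrable fun x => Real.exp (η * x) * f x := by
  have hfactor : (fun x => Real.exp (η * x) * f x) =
      fun x => Real.exp ((η - δ) * x) * (Real.exp (δ * x) * f x) := by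
    ext x
    rw [← mul_assoc, ← Real.exp_add]
    ring_nf
  refine hδ.mono' (hfactor ▸ .mul (by fun_prop) hδ.aestronglyMeasurable) (.of_forall fun x => ?_)
  rw [Real.norm_of_nonneg (mul_nonneg (Real.exp_nonneg _) (hf.nonneg x))]
  rcases lt_or_ge x 0 with hx | hx
  · simp only [hf.eq_zero_of_neg x hx, mul_zero, le_refl]
  · gcongr
    exact hf.nonneg x

lemma integrable (hf : IsLightTailed f) : Integrable f := by
  obtain ⟨δ, hδ₀, hδ⟩ := hf.exists_integrable_exp
  simpa only [zero_mul, Real.exp_zero, one_mul] using hf.integrable_exp_of_le hδ hδ₀.le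

lemma integrable_mul (hf : IsLightTailed f) : Integrable fun x => x * f x := by
  obtain ⟨δ, hδ₀, hδ⟩ := hf.exists_integrable_exp
  refine (hδ.const_mul δ⁻¹).mono' (.mul (by fun_prop) hf.integrable.aestronglyMeasurable)
    (.of_forall fun x => ?_)
  rcases lt_or_ge x 0 with hx | hx
  · simp only [hf.eq_zero_of_neg x hx, mul_zero, norm_zero, le_refl]
  · have hexp : x ≤ δ⁻¹ * Real.exp (δ * x) := by
      rw [le_inv_mul_iff₀ hδ₀]
      linarith [Real.add_one_le_exp (δ * x)]
    rw [Real.norm_of_nonneg (mul_nonneg hx (hf.nonneg x)), ← mul_assoc]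
    exact mul_le_mul_of_nonneg_right hexp (hf.nonneg x)

lemma gammaConv_eq_zero (hf : IsLightTailed f) (hy : y ≤ 0) : gammaConv f k r y = 0 :=
  gammaConv_eq_zero_of_le (.of_forall hf.eq_zero_of_neg) hy

lemma exists_integrable_bound_gammaConv_mul_log_add_one (hf : IsLightTailed f)
    (hk : 1 ≤ k) (hr₁ : 0 < r₁) (r₂ : ℝ) :
    ∃ G : ℝ → ℝ, Integrable G ∧ ∀ r ∈ Icc r₁ r₂, ∀ y,
      (1 + |y|) * |gammaConv f k r y * (Real.log (gammaConv f k r y) + 1)| ≤ G y := by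
  obtain ⟨δ, hδ₀, hδ⟩ := hf.exists_integrable_exp
  obtain ⟨η, hη₀, hη⟩ := exists_between (lt_min hδ₀ hr₁)
  obtain ⟨A, hA⟩ := exists_gammaConv_le_exp hf.nonneg hf.integrable
    (hf.integrable_exp_of_le hδ (hη.le.trans (min_le_left δ r₁))) hk
    (hη.trans_le (min_le_right δ r₁)) hr₁ r₂
  obtain ⟨C, hC⟩ := exists_abs_mul_log_add_one_le_sqrt A
  refine ⟨_, (integrable_indicator_one_add_abs_mul_exp (half_pos hη₀)).const_mul (|C| * √A),
    fun r hr y => ?_⟩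
  rcases lt_or_ge y 0 with hy | hy
  · simp only [hf.gammaConv_eq_zero hy.le, zero_mul, abs_zero, mul_zero,
      indicator_of_notMem (notMem_Ici.2 hy), le_refl]
  rw [indicator_of_mem (mem_Ici.2 hy)]
  have hF := gammaConv_nonneg hf.nonneg (by linarith : 0 < k) (hr₁.trans_le hr.1) y
  have hFexp := hA r hr y
  have hA₀ : 0 ≤ A := nonneg_of_mul_nonneg_left (hF.trans hFexp) (Real.exp_pos _)
  have hFA : gammaConv f k r y ≤ A := hFexp.trans <|
    mul_le_of_le_one_right hA₀ (Real.exp_le_one_iff.2 (by nlinarith))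
  calc (1 + |y|) * |gammaConv f k r y * (Real.log (gammaConv f k r y) + 1)|
      ≤ (1 + |y|) * (|C| * √(gammaConv f k r y)) := by
        gcongr
        exact (hC _ ⟨hF, hFA⟩).trans (by gcongr; exact le_abs_self C)
    _ ≤ (1 + |y|) * (|C| * √(A * Real.exp (-(η * y)))) := by gcongr
    _ = |C| * √A * ((1 + |y|) * Real.exp (-(η / 2 * y))) := by
        rw [Real.sqrt_mul hA₀, ← Real.exp_half]
        ring_nf

lemma integrable_gammaConv_mul_log_add_one (hf : IsLightTailed f) (hk : 1 ≤ k) (hr : 0 < r) :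
    Integrable fun y => gammaConv f k r y * (Real.log (gammaConv f k r y) + 1) := by
  have hk₀ : 0 < k := by linarith
  obtain ⟨G, hG, hbound⟩ := hf.exists_integrable_bound_gammaConv_mul_log_add_one hk hr r
  refine hG.mono' ((integrable_gammaConv hf.integrable hk₀ hr).aestronglyMeasurable.mul
    (aestronglyMeasurable_log_gammaConv_add_one hf.integrable hk₀ hr)) (.of_forall fun y => ?_)
  exact (le_mul_of_one_le_left (abs_nonneg _) (by linarith [abs_nonneg y])).trans
    (hbound r ⟨le_rfl, le_rfl⟩ y)

lemma integrable_gammaConv_add_one_mul_log_add_one (hf : IsLightTailed f) (hk : 1 ≤ k)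
    (hr : 0 < r) :
    Integrable fun y => gammaConv f (k + 1) r y * (Real.log (gammaConv f k r y) + 1) := by
  have hk₀ : 0 < k := by linarith
  obtain ⟨G, hG, hbound⟩ := hf.exists_integrable_bound_gammaConv_mul_log_add_one hk hr r
  refine (hG.const_mul (r / k)).mono' ((integrable_gammaConv hf.integrable
    (by linarith) hr).aestronglyMeasurable.mul
    (aestronglyMeasurable_log_gammaConv_add_one hf.integrable hk₀ hr)) (.of_forall fun y => ?_)
  refine (abs_gammaConv_add_one_mul_le hf.nonneg hf.integrable (.of_forall hf.eq_zero_of_neg)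
    hk hr y _).trans ?_
  rw [sub_zero, mul_assoc]
  gcongr
  exact (mul_le_mul_of_nonneg_right (by linarith) (abs_nonneg _)).trans
    (hbound r ⟨le_rfl, le_rfl⟩ y)

lemma integrable_gammaConv_sub_mul_log_add_one (hf : IsLightTailed f) (hk : 1 ≤ k) (hr : 0 < r) :
    Integrable fun y =>
      (gammaConv f k r y - gammaConv f (k + 1) r y) * (Real.log (gammaConv f k r y) + 1) := by
  simp only [sub_mul]
  exact (hf.integrable_gammaConv_mul_log_add_one hk hr).sub
    (hf.integrable_gammaConv_add_one_mul_log_add_one hk hr)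

lemma integrable_gammaConv_mul_log (hf : IsLightTailed f) (hk : 1 ≤ k) (hr : 0 < r) :
    Integrable fun y => gammaConv f k r y * Real.log (gammaConv f k r y) := by
  refine ((hf.integrable_gammaConv_mul_log_add_one hk hr).sub
    (integrable_gammaConv (k := k) hf.integrable (by linarith) hr)).congr
    (.of_forall fun y => ?_)
  simp only [Pi.sub_apply]
  ring

lemma abs_div_mul_gammaConv_sub_mul_le (hf : IsLightTailed f) (hk : 1 ≤ k) (hr : 0 < r)
    (y L : ℝ) :
    |k / r * ((gammaConv f k r y - gammaConv f (k + 1) r y) * L)| ≤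
      (k / r + |y|) * |gammaConv f k r y * L| := by
  have hk₀ : 0 < k := by linarith
  have hsucc := abs_gammaConv_add_one_mul_le hf.nonneg hf.integrable
    (.of_forall hf.eq_zero_of_neg) hk hr y L
  rw [sub_zero] at hsucc
  calc |k / r * ((gammaConv f k r y - gammaConv f (k + 1) r y) * L)|
      ≤ k / r * (|gammaConv f k r y * L| + |gammaConv f (k + 1) r y * L|) := by
        rw [abs_mul, abs_of_pos (div_pos hk₀ hr), sub_mul]
        gcongr
        exact abs_sub _ _
    _ ≤ k / r * (|gammaConv f k r y * L| + r / k * |y| * |gammaConv f k r y * L|) := by gcongr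
    _ = (k / r + |y|) * |gammaConv f k r y * L| := by field_simp

lemma hasDerivAt_integral_gammaConv_mul_log_rate (hf : IsLightTailed f) (hk : 1 ≤ k)
    (hr : 0 < r) :
    HasDerivAt (fun r => ∫ y, gammaConv f k r y * Real.log (gammaConv f k r y))
      (k / r * ∫ y, (gammaConv f k r y - gammaConv f (k + 1) r y) *
        (Real.log (gammaConv f k r y) + 1)) r := by
  have hk₀ : 0 < k := by linarith
  obtain ⟨G, hG, hbound⟩ :=
    hf.exists_integrable_bound_gammaConv_mul_log_add_one hk (half_pos hr) (2 * r)
  have hpos {s : ℝ} (hs : s ∈ Icc (r / 2) (2 * r)) : 0 < s := (half_pos hr).trans_le hs.1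
  have hnhds : Icc (r / 2) (2 * r) ∈ 𝓝 r := Icc_mem_nhds (by linarith) (by linarith)
  have hint {s : ℝ} (hs : 0 < s) := hf.integrable_gammaConv_mul_log hk hs
  rw [← integral_const_mul]
  refine (hasDerivAt_integral_of_dominated_loc_of_deriv_le
    (F := fun s y => gammaConv f k s y * Real.log (gammaConv f k s y))
    (F' := fun s y => k / s * ((gammaConv f k s y - gammaConv f (k + 1) s y) *
      (Real.log (gammaConv f k s y) + 1)))
    (bound := fun y => (k / (r / 2) + 1) * G y) hnhds ?_ (hint hr)
    ((hf.integrable_gammaConv_sub_mul_log_add_one hk hr).const_mul _).aestronglyMeasurable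
    (.of_forall fun y s hs => ?_) (hG.const_mul _)
    (.of_forall fun y s hs =>
      hasDerivAt_gammaConv_mul_log_rate hf.nonneg hf.integrable hk (hpos hs) y)).2
  · filter_upwards [hnhds] with s hs using (hint (hpos hs)).aestronglyMeasurable
  · have hs₀ := hpos hs
    calc _ ≤ (k / s + |y|) * |gammaConv f k s y * (Real.log (gammaConv f k s y) + 1)| :=
          hf.abs_div_mul_gammaConv_sub_mul_le hk hs₀ y _
      _ ≤ ((k / (r / 2) + 1) * (1 + |y|)) *
            |gammaConv f k s y * (Real.log (gammaConv f k s y) + 1)| := by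
          gcongr
          have hrate : k / s ≤ k / (r / 2) := by gcongr; exact hs.1
          nlinarith [abs_nonneg y, div_pos hk₀ (half_pos hr)]
      _ ≤ (k / (r / 2) + 1) * G y := by
          rw [mul_assoc]
          gcongr
          exact hbound s hs y

lemma abs_posteriorMean_le (hf : IsLightTailed f) (hk : 1 ≤ k) (hr : 0 < r) (y : ℝ) :
    |posteriorMean f k r y| ≤ |y| := by
  have hk₀ : 0 < k := by linarith
  have hF := gammaConv_nonneg hf.nonneg hk₀ hr y
  have hxf (x : ℝ) : 0 ≤ x * f x := by
    rcases lt_or_ge x 0 with hx | hx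
    · simp only [hf.eq_zero_of_neg x hx, mul_zero, le_refl]
    · exact mul_nonneg hx (hf.nonneg x)
  have hle : gammaConv (fun x => x * f x) k r y ≤ y * gammaConv f k r y := by
    have hsucc := gammaConv_nonneg hf.nonneg (by linarith : 0 < k + 1) hr y
    rw [gammaConv_add_one hf.integrable hf.integrable_mul hk hr] at hsucc
    exact sub_nonneg.1 (nonneg_of_mul_nonneg_right hsucc (div_pos hr hk₀))
  rw [posteriorMean, abs_of_nonneg (div_nonneg (gammaConv_nonneg hxf hk₀ hr y) hF)]
  refine div_le_of_le_mul₀ hF (abs_nonneg y) (hle.trans ?_)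
  gcongr
  exact le_abs_self y

lemma integrable_gammaConv_mul_posteriorMean (hf : IsLightTailed f) {j : ℝ} (hj : 1 ≤ j)
    (hk : 1 ≤ k) (hr : 0 < r) :
    Integrable fun y => gammaConv f j r y * posteriorMean f k r y := by
  have hk₀ : 0 < k := by linarith
  have hj₀ : 0 < j := by linarith
  have hmeas : AEStronglyMeasurable (posteriorMean f k r) :=
    ((integrable_gammaConv hf.integrable_mul hk₀ hr).aemeasurable.div
      (integrable_gammaConv hf.integrable hk₀ hr).aemeasurable).aestronglyMeasurable
  refine (integrable_mul_gammaConv hf.integrable hf.integrable_mul hj hr).mono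
    ((integrable_gammaConv hf.integrable hj₀ hr).aestronglyMeasurable.mul hmeas)
    (.of_forall fun y => ?_)
  rw [mul_comm, norm_mul, norm_mul]
  gcongr
  exact hf.abs_posteriorMean_le hk hr y

lemma integral_gammaConv_sub_mul_log_add_one (hf : IsLightTailed f) (hk : 2 ≤ k) (hr : 0 < r) :
    ∫ y, (gammaConv f k r y - gammaConv f (k + 1) r y) * (Real.log (gammaConv f k r y) + 1) =
      (∫ x, f x) - r / k * ((∫ y, y * gammaConv f (k - 1) r y) -
        ∫ y, gammaConv f (k - 1) r y * posteriorMean f k r y) := by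
  have hk₁ : 1 ≤ k := by linarith
  have hk₂ : 1 ≤ k - 1 := by linarith
  have hsucc := integrable_gammaConv (k := k + 1) hf.integrable (by linarith) hr
  have hlog := hf.integrable_gammaConv_sub_mul_log_add_one hk₁ hr
  have hmean := hf.integrable_gammaConv_mul_posteriorMean hk₂ hk₁ hr
  have hpred := integrable_mul_gammaConv hf.integrable hf.integrable_mul hk₂ hr
  have hresidual : Integrable fun y =>
      r / k * (y * gammaConv f (k - 1) r y - gammaConv f (k - 1) r y * posteriorMean f k r y) :=
    (hpred.sub hmean).const_mul _
  have hsum := hlog.fun_add hresidual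
  have hparts := integral_eq_zero_of_hasDerivAt_of_integrable
    (hasDerivAt_gammaConv_add_one_mul_log_add_one hf.nonneg hf.integrable
      hf.integrable_mul hk hr)
    ((hsum.sub hsucc).const_mul r)
    (hf.integrable_gammaConv_add_one_mul_log_add_one hk₁ hr)
  rw [integral_const_mul, integral_sub hsum hsucc, integral_add hlog hresidual,
    integral_const_mul, integral_sub hpred hmean,
    integral_gammaConv hf.integrable (by linarith) hr] at hparts
  linarith [(mul_eq_zero.1 hparts).resolve_left hr.ne']

lemma hasDerivAt_integral_gammaConv_mul_log (hf : IsLightTailed f) (hk : 2 ≤ k) (hr : 0 < r) :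
    HasDerivAt (fun r => ∫ y, gammaConv f k r y * Real.log (gammaConv f k r y))
      ((∫ x, f x) / r - (∫ x, x * f x) +
        ∫ y, gammaConv f (k - 1) r y * posteriorMean f k r y) r := by
  refine (hf.hasDerivAt_integral_gammaConv_mul_log_rate (by linarith) hr).congr_deriv ?_
  rw [hf.integral_gammaConv_sub_mul_log_add_one hk hr,
    integral_mul_gammaConv hf.integrable hf.integrable_mul (by linarith) hr]
  field_simp
  ring

end IsLightTailed

end GammaNoise

theorem entropy_derivative_gamma_noise_general
    (fX : ℝ → ℝ)
    (hfX_nonneg : ∀ x, 0 ≤ fX x) (hfX_prob : (∫ x, fX x) = 1)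
    (hfX_supp : ∀ x, x < 0 → fX x = 0)
    (hfX_exp : ∃ s > 0, Integrable (fun x => Real.exp (s * x) * fX x))
    (α : ℝ) (hα : 2 ≤ α)
    (g : ℝ → ℝ → ℝ)
    (hg : ∀ k w : ℝ, g k w =
      if 0 ≤ w then w ^ (k - 1) * Real.exp (-w) / Real.Gamma k else 0)
    (fYk : ℝ → ℝ → ℝ → ℝ)
    (hfYk : ∀ k b y, fYk k b y =
      ∫ x, fX x * ((Real.sqrt b)⁻¹ * g k ((y - x) / Real.sqrt b)))
    (a : ℝ) (ha : 0 < a)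
    (m : ℝ → ℝ)
    (hm : ∀ y, m y =
      (∫ x, x * fX x * ((Real.sqrt a)⁻¹ * g α ((y - x) / Real.sqrt a))) /
        fYk α a y) :
    HasDerivAt (fun b => -∫ y, fYk α b y * Real.log (fYk α b y))
      ((1 / (2 * a * Real.sqrt a)) *
        (Real.sqrt a - (∫ x, x * fX x) + ∫ y, fYk (α - 1) a y * m y)) a := by
  have hf : GammaNoise.IsLightTailed fX := ⟨hfX_nonneg, hfX_supp, hfX_exp⟩
  have hsqrt : 0 < √a := Real.sqrt_pos.2 ha
  have hkernel (k u : ℝ) {b : ℝ} (hb : 0 < b) :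
      (√b)⁻¹ * g k (u / √b) = ProbabilityTheory.gammaPDFReal k (√b)⁻¹ u := by
    rw [← GammaNoise.inv_mul_gammaPDFReal_div (Real.sqrt_pos.2 hb), hg,
      ProbabilityTheory.gammaPDFReal, Real.one_rpow]
    ring_nf
  have houtput (k y : ℝ) {b : ℝ} (hb : 0 < b) :
      fYk k b y = GammaNoise.gammaConv fX k (√b)⁻¹ y := by
    simp only [hfYk, hkernel _ _ hb, GammaNoise.gammaConv]
  have hmean (y : ℝ) : m y = GammaNoise.posteriorMean fX α (√a)⁻¹ y := by
    simp only [hm, houtput _ _ ha, hkernel _ _ ha, GammaNoise.posteriorMean, GammaNoise.gammaConv]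
  have hrate : HasDerivAt (fun b => (√b)⁻¹) (-(1 / (2 * √a)) / √a ^ 2) a :=
    (Real.hasDerivAt_sqrt ha.ne').inv hsqrt.ne'
  have hentropy :=
    ((hf.hasDerivAt_integral_gammaConv_mul_log hα (inv_pos.2 hsqrt)).comp a hrate).neg
  simp only [hmean, houtput _ _ ha]
  refine (hentropy.congr_deriv ?_).congr_of_eventuallyEq ?_
  · rw [hfX_prob, Real.sq_sqrt ha.le]
    field_simp
  · filter_upwards [Ioi_mem_nhds ha] with b hb
    simp only [houtput _ _ hb, Function.comp_apply, Pi.neg_apply]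

/-- **Entropy derivative for gamma noise.** For a nonnegative `X` with an
existing moment generating function and independent `Gamma(α,1)` noise `W`
with `α ≥ 2`,
`d/da h(Y) = (1/(2a√a))·(√a − E[X] + ∫ f_{Y_{α−1}}(y;a) m(y;a) dy)`,
where `m` is the posterior mean of `X` given `Y = y` and `Y_k = X + √a·W_k`
denotes the output for gamma noise of shape `k`. -/
theorem entropy_derivative_gamma_noise
    (fX : ℝ → ℝ)
    (hfX_nonneg : ∀ x, 0 ≤ fX x) (hfX_prob : (∫ x, fX x) = 1)
    (hfX_supp : ∀ x, x < 0 → fX x = 0)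
    (hfX_mgf : ∀ s : ℝ, Integrable (fun x => Real.exp (s * x) * fX x))
    (α : ℝ) (hα : 2 ≤ α)
    (g : ℝ → ℝ → ℝ)
    (hg : ∀ k w : ℝ, g k w =
      if 0 ≤ w then w ^ (k - 1) * Real.exp (-w) / Real.Gamma k else 0)
    (fYk : ℝ → ℝ → ℝ → ℝ)
    (hfYk : ∀ k b y, fYk k b y =
      ∫ x, fX x * ((Real.sqrt b)⁻¹ * g k ((y - x) / Real.sqrt b)))
    (a : ℝ) (ha : 0 < a)
    (m : ℝ → ℝ)
    (hm : ∀ y, m y =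
      (∫ x, x * fX x * ((Real.sqrt a)⁻¹ * g α ((y - x) / Real.sqrt a))) /
        fYk α a y) :
    HasDerivAt (fun b => -∫ y, fYk α b y * Real.log (fYk α b y))
      ((1 / (2 * a * Real.sqrt a)) *
        (Real.sqrt a - (∫ x, x * fX x) + ∫ y, fYk (α - 1) a y * m y)) a := by
  exact entropy_derivative_gamma_noise_general fX hfX_nonneg hfX_prob hfX_supp
    ⟨1, one_pos, hfX_mgf 1⟩ α hα g hg fYk hfYk a ha m hm
end

section
/- (Fisher information inequality for Gaussian perturbation) Let X be a real random variable with a differentiable, everywhere positive density f_X, finite second moment, and finite Fisher information J(X) = ∫ f_X'(x)²/f_X(x) dx > 0, and let W be an independent standard Gaussian. Then for every a ≥ 0, the Fisher information J(a) of Y = X + √a·W (defined as J(a) = ∫ f_Y(y;a) (∂/∂y log f_Y(y;a))² dy with f_Y(y;a) = ∫ f_X(x)(2πa)^{−1/2}exp(−(y−x)²/(2a)) dx for a > 0, and J(0) = J(X)) satisfies 1/J(a) ≥ 1/J(X) + a. -/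
open MeasureTheory Filter

/-!
Blachman's proof of Stam's inequality `1 / J(X) + 1 / J(Z) ≤ 1 / J(X + Z)` for independent `X`, `Z`
with densities `f`, `g`. The derivative of `f ⋆ g` is both `f' ⋆ g` and `f ⋆ g'`, so for every `s`
the score of `X + Z` is the conditional expectation of `s * f' / f + (1 - s) * g' / g` given the
sum. By Cauchy–Schwarz its second moment is at most that of the combined score; the mixed term
vanishes because `∫ f' = 0`, which leaves `J(X + Z) ≤ s ^ 2 * J(X) + (1 - s) ^ 2 * J(Z)`, and the
best `s` gives Stam's inequality. For Gaussian `Z` of variance `a`, `1 / J(Z) = a`.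
-/

open Set ProbabilityTheory
open scoped Convolution NNReal

section Sedrakyan

variable {α : Type*} [MeasurableSpace α] {μ : Measure α} {u w : α → ℝ}

-- Integrate `0 ≤ (u - m * w) ^ 2 / w` with `m = (∫ u) / ∫ w`.
theorem sq_integral_div_le_integral_sq_div (hw : ∀ᵐ x ∂μ, 0 < w x) (hu_int : Integrable u μ)
    (hw_int : Integrable w μ) (huw_int : Integrable (fun x => u x ^ 2 / w x) μ) :
    (∫ x, u x ∂μ) ^ 2 / ∫ x, w x ∂μ ≤ ∫ x, u x ^ 2 / w x ∂μ := by
  set U := ∫ x, u x ∂μ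
  set W := ∫ x, w x ∂μ
  have h_tangent : ∫ x, (2 * (U / W) * u x - (U / W) ^ 2 * w x) ∂μ ≤ ∫ x, u x ^ 2 / w x ∂μ := by
    refine integral_mono_ae ((hu_int.const_mul _).sub (hw_int.const_mul _)) huw_int ?_
    filter_upwards [hw] with x hx
    rw [le_div_iff₀ hx]
    linarith [sq_nonneg (u x - U / W * w x)]
  rw [integral_sub (hu_int.const_mul _) (hw_int.const_mul _), integral_const_mul,
    integral_const_mul] at h_tangent
  convert h_tangent using 1
  change U ^ 2 / W = 2 * (U / W) * U - (U / W) ^ 2 * W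
  obtain hW | hW := eq_or_ne W 0
  · simp [hW]
  · field_simp
    ring

end Sedrakyan

section IntegrableDeriv

variable {E : Type*} [NormedAddCommGroup E] [NormedSpace ℝ E] [CompleteSpace E] {f f' : ℝ → E}

theorem norm_sub_le_integral_norm_of_hasDerivAt (hf : ∀ x, HasDerivAt f (f' x) x)
    (hf' : Integrable f') (a b : ℝ) : ‖f b - f a‖ ≤ ∫ x, ‖f' x‖ := by
  rw [← intervalIntegral.integral_eq_sub_of_hasDerivAt (fun x _ => hf x) hf'.intervalIntegrable]
  exact intervalIntegral.norm_integral_le_integral_norm_uIoc.trans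
    (setIntegral_le_integral hf'.norm (.of_forall fun x => norm_nonneg _))

theorem bddAbove_range_norm_of_hasDerivAt_of_integrable (hf : ∀ x, HasDerivAt f (f' x) x)
    (hf' : Integrable f') : BddAbove (range fun x => ‖f x‖) := by
  refine ⟨‖f 0‖ + ∫ x, ‖f' x‖, ?_⟩
  rintro _ ⟨x, rfl⟩
  calc ‖f x‖ ≤ ‖f 0‖ + ‖f x - f 0‖ := norm_le_norm_add_norm_sub' _ _
    _ ≤ ‖f 0‖ + ∫ x, ‖f' x‖ := by grw [norm_sub_le_integral_norm_of_hasDerivAt hf hf' 0 x]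

theorem eq_of_hasDerivAt_of_ae_eq_zero (hf : ∀ x, HasDerivAt f (f' x) x)
    (hf' : f' =ᵐ[volume] 0) (a b : ℝ) : f a = f b := by
  have h_le := norm_sub_le_integral_norm_of_hasDerivAt hf
    ((integrable_zero ℝ E volume).congr hf'.symm) b a
  have h_zero : ∫ x, ‖f' x‖ = 0 := integral_eq_zero_of_ae (hf'.mono fun x hx => by simp [hx])
  rwa [h_zero, norm_le_zero_iff, sub_eq_zero] at h_le

end IntegrableDeriv

section Convolution

variable {E E' F : Type*} [NormedAddCommGroup E] [NormedSpace ℝ E]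
  [NormedAddCommGroup E'] [NormedSpace ℝ E'] [NormedAddCommGroup F] [NormedSpace ℝ F]
  {f f' : ℝ → E} {g g' : ℝ → E'} (L : E →L[ℝ] E' →L[ℝ] F)

theorem convolutionExists_of_integrable_of_bddAbove (hf : Integrable f)
    (hg : AEStronglyMeasurable g) (hg_bdd : BddAbove (range fun x => ‖g x‖)) :
    ConvolutionExists f g L volume := fun _ =>
  (hg_bdd.mono (image_subset_range _ _)).convolutionExistsAt L .univ (subset_univ _)
    hf.integrableOn hg

variable [CompleteSpace F]

theorem intervalIntegral_convolution_of_hasDerivAt [CompleteSpace E'] (hf : Integrable f)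
    (hg : ∀ x, HasDerivAt g (g' x) x) (hg' : Integrable g') (a b : ℝ) :
    ∫ y in a..b, (f ⋆[L] g') y = (f ⋆[L] g) b - (f ⋆[L] g) a := by
  have hg_cont : Continuous g := continuous_iff_continuousAt.2 fun x => (hg x).continuousAt
  have h_exists := convolutionExists_of_integrable_of_bddAbove L hf hg_cont.aestronglyMeasurable
    (bddAbove_range_norm_of_hasDerivAt_of_integrable hg hg')
  have h_ftc (x : ℝ) :
      ∫ y in a..b, L (f x) (g' (y - x)) = L (f x) (g (b - x)) - L (f x) (g (a - x)) :=
    intervalIntegral.integral_eq_sub_of_hasDerivAt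
      (fun y _ => (L (f x)).hasFDerivAt.comp_hasDerivAt y ((hg (y - x)).comp_sub_const y x))
      (((L (f x)).integrable_comp (hg'.comp_sub_right x)).intervalIntegrable)
  calc ∫ y in a..b, (f ⋆[L] g') y
      = ∫ x, ∫ y in a..b, L (f x) (g' (y - x)) :=
        intervalIntegral_integral_swap <| (hf.convolution_integrand L hg').mono_measure <|
          Measure.prod_mono Measure.restrict_le_self le_rfl
    _ = (f ⋆[L] g) b - (f ⋆[L] g) a := by
        simp_rw [h_ftc]
        exact integral_sub (h_exists b) (h_exists a)

theorem hasDerivAt_convolution_right_of_integrable [CompleteSpace E'] (hf : Integrable f)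
    (hf_cont : Continuous f) (hf_bdd : BddAbove (range fun x => ‖f x‖))
    (hg : ∀ x, HasDerivAt g (g' x) x) (hg' : Integrable g') (x : ℝ) :
    HasDerivAt (f ⋆[L] g) ((f ⋆[L] g') x) x := by
  have h_eq : f ⋆[L] g = fun y => (∫ t in x..y, (f ⋆[L] g') t) + (f ⋆[L] g) x := by
    ext y
    rw [intervalIntegral_convolution_of_hasDerivAt L hf hg hg', sub_add_cancel]
  have h_cont : Continuous (f ⋆[L] g') :=
    hf_bdd.continuous_convolution_left_of_integrable L hf_cont hg'
  rw [h_eq]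
  exact (h_cont.integral_hasStrictDerivAt x x).hasDerivAt.add_const _

theorem hasDerivAt_convolution_left_of_integrable [CompleteSpace E]
    (hf : ∀ x, HasDerivAt f (f' x) x) (hf' : Integrable f') (hg : Integrable g)
    (hg_cont : Continuous g) (hg_bdd : BddAbove (range fun x => ‖g x‖)) (x : ℝ) :
    HasDerivAt (f ⋆[L] g) ((f' ⋆[L] g) x) x := by
  rw [← convolution_flip, ← convolution_flip L]
  exact hasDerivAt_convolution_right_of_integrable L.flip hg hg_cont hg_bdd hf hf' x

end Convolution

section FisherInformation

/-- The integrand `f'² / f` of the Fisher information of a density `f` with respect to a location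
parameter, which is the squared score weighted by `f`. -/
noncomputable def fisherIntegrand (f : ℝ → ℝ) (x : ℝ) : ℝ :=
  deriv f x ^ 2 / f x

/-- The Fisher information of a density `f` on `ℝ` with respect to a location parameter. As a
Bochner integral it is `0` when the Fisher information is infinite. -/
noncomputable def fisherInfo (f : ℝ → ℝ) : ℝ :=
  ∫ x, fisherIntegrand f x

/-- Everywhere positive and differentiable probability densities on `ℝ` with finite Fisher
information. -/
structure IsFisherDensity (f : ℝ → ℝ) : Prop where
  pos : ∀ x, 0 < f x
  differentiable : Differentiable ℝ f
  integral_eq_one : ∫ x, f x = 1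
  integrable_fisherIntegrand : Integrable (fisherIntegrand f)

theorem fisherIntegrand_nonneg {f : ℝ → ℝ} {x : ℝ} (hf : 0 ≤ f x) : 0 ≤ fisherIntegrand f x :=
  div_nonneg (sq_nonneg _) hf

theorem integral_mul_sq_deriv_log {f : ℝ → ℝ} (hf : Differentiable ℝ f) (hf_ne : ∀ x, f x ≠ 0) :
    ∫ x, f x * deriv (fun x' => Real.log (f x')) x ^ 2 = fisherInfo f := by
  refine integral_congr_ae (.of_forall fun x => ?_)
  have := hf_ne x
  simp only [deriv.log (hf x) (hf_ne x), fisherIntegrand]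
  field_simp

/-- The second conditional moment of the combined score `s * f' / f + (1 - s) * g' / g` given that
two independent summands with densities `f` and `g` add up to `y`, times the density `(f ⋆ g) y` of
the sum. The square is expanded so that every term is a convolution of integrable functions. -/
noncomputable def blachmanBound (f g : ℝ → ℝ) (s y : ℝ) : ℝ :=
  s ^ 2 * (fisherIntegrand f ⋆ g) y + 2 * s * (1 - s) * (deriv f ⋆ deriv g) y
    + (1 - s) ^ 2 * (f ⋆ fisherIntegrand g) y

theorem sq_combination_div {f g : ℝ → ℝ} (s : ℝ) {x z : ℝ} (hf : f x ≠ 0) (hg : g z ≠ 0) :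
    (s * (deriv f x * g z) + (1 - s) * (f x * deriv g z)) ^ 2 / (f x * g z) =
      s ^ 2 * (fisherIntegrand f x * g z) + 2 * s * (1 - s) * (deriv f x * deriv g z)
        + (1 - s) ^ 2 * (f x * fisherIntegrand g z) := by
  simp only [fisherIntegrand]
  field_simp
  ring

namespace IsFisherDensity

variable {f g : ℝ → ℝ}

theorem integrable (hf : IsFisherDensity f) : Integrable f :=
  .of_integral_ne_zero (by simp [hf.integral_eq_one])

theorem integrable_deriv (hf : IsFisherDensity f) : Integrable (deriv f) := by
  refine (hf.integrable_fisherIntegrand.add hf.integrable).mono'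
    (aestronglyMeasurable_deriv f volume) (.of_forall fun x => ?_)
  have h_factor : fisherIntegrand f x * f x = deriv f x ^ 2 := div_mul_cancel₀ _ (hf.pos x).ne'
  have h_sq : deriv f x ^ 2 ≤ (fisherIntegrand f x + f x) ^ 2 := by
    nlinarith only [h_factor, sq_nonneg (deriv f x), sq_nonneg (fisherIntegrand f x),
      sq_nonneg (f x)]
  exact abs_le_of_sq_le_sq h_sq (add_nonneg (fisherIntegrand_nonneg (hf.pos x).le) (hf.pos x).le)

theorem bddAbove_range_norm (hf : IsFisherDensity f) : BddAbove (range fun x => ‖f x‖) :=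
  bddAbove_range_norm_of_hasDerivAt_of_integrable (fun x => (hf.differentiable x).hasDerivAt)
    hf.integrable_deriv

theorem integral_deriv (hf : IsFisherDensity f) : ∫ x, deriv f x = 0 :=
  integral_eq_zero_of_hasDerivAt_of_integrable (fun x => (hf.differentiable x).hasDerivAt)
    hf.integrable_deriv hf.integrable

theorem fisherInfo_pos (hf : IsFisherDensity f) : 0 < fisherInfo f := by
  have h_nonneg : 0 ≤ fisherIntegrand f := fun x => fisherIntegrand_nonneg (hf.pos x).le
  refine (integral_nonneg h_nonneg).lt_of_ne' fun h_zero => ?_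
  have h_deriv : deriv f =ᵐ[volume] 0 := by
    rw [integral_eq_zero_iff_of_nonneg h_nonneg hf.integrable_fisherIntegrand] at h_zero
    filter_upwards [h_zero] with x hx
    simpa [fisherIntegrand, (hf.pos x).ne'] using hx
  have h_const : f = fun _ => f 0 := funext fun x =>
    eq_of_hasDerivAt_of_ae_eq_zero (fun x => (hf.differentiable x).hasDerivAt) h_deriv x 0
  have h_int := hf.integral_eq_one
  rw [h_const] at h_int
  simp [measureReal_def] at h_int

theorem hasDerivAt_convolution_left (hf : IsFisherDensity f) (hg : IsFisherDensity g) (y : ℝ) :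
    HasDerivAt (f ⋆ g) ((deriv f ⋆ g) y) y :=
  hasDerivAt_convolution_left_of_integrable _ (fun x => (hf.differentiable x).hasDerivAt)
    hf.integrable_deriv hg.integrable hg.differentiable.continuous hg.bddAbove_range_norm y

theorem hasDerivAt_convolution_right (hf : IsFisherDensity f) (hg : IsFisherDensity g) (y : ℝ) :
    HasDerivAt (f ⋆ g) ((f ⋆ deriv g) y) y :=
  hasDerivAt_convolution_right_of_integrable _ hf.integrable hf.differentiable.continuous
    hf.bddAbove_range_norm (fun x => (hg.differentiable x).hasDerivAt) hg.integrable_deriv y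

theorem convolutionExists (hf : IsFisherDensity f) (hg : IsFisherDensity g) :
    ConvolutionExists f g (.lsmul ℝ ℝ) volume :=
  convolutionExists_of_integrable_of_bddAbove _ hf.integrable
    hg.differentiable.continuous.aestronglyMeasurable hg.bddAbove_range_norm

theorem convolution_pos (hf : IsFisherDensity f) (hg : IsFisherDensity g) (y : ℝ) :
    0 < (f ⋆ g) y := by
  have h_pos (x : ℝ) : 0 < f x * g (y - x) := mul_pos (hf.pos x) (hg.pos (y - x))
  have h_supp : (Function.support fun x => f x * g (y - x)) = univ :=
    eq_univ_of_forall fun x => (h_pos x).ne'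
  rw [convolution_lsmul]
  refine (integral_pos_iff_support_of_nonneg (fun x => (h_pos x).le)
    (hf.convolutionExists hg y)).2 ?_
  simp [h_supp]

theorem integral_convolution_eq_one (hf : IsFisherDensity f) (hg : IsFisherDensity g) :
    ∫ y, (f ⋆ g) y = 1 := by
  rw [integral_convolution _ hf.integrable hg.integrable]
  simp [hf.integral_eq_one, hg.integral_eq_one]

theorem integrable_blachmanBound (hf : IsFisherDensity f) (hg : IsFisherDensity g) (s : ℝ) :
    Integrable (blachmanBound f g s) :=
  (((hf.integrable_fisherIntegrand.integrable_convolution _ hg.integrable).const_mul _).add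
    ((hf.integrable_deriv.integrable_convolution _ hg.integrable_deriv).const_mul _)).add
    ((hf.integrable.integrable_convolution _ hg.integrable_fisherIntegrand).const_mul _)

theorem integral_blachmanBound (hf : IsFisherDensity f) (hg : IsFisherDensity g) (s : ℝ) :
    ∫ y, blachmanBound f g s y = s ^ 2 * fisherInfo f + (1 - s) ^ 2 * fisherInfo g := by
  have h_left := (hf.integrable_fisherIntegrand.integrable_convolution (.lsmul ℝ ℝ)
    hg.integrable).const_mul (s ^ 2)
  have h_cross := (hf.integrable_deriv.integrable_convolution (.lsmul ℝ ℝ)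
    hg.integrable_deriv).const_mul (2 * s * (1 - s))
  have h_right := (hf.integrable.integrable_convolution (.lsmul ℝ ℝ)
    hg.integrable_fisherIntegrand).const_mul ((1 - s) ^ 2)
  simp only [blachmanBound]
  rw [integral_add (h_left.fun_add h_cross) h_right, integral_add h_left h_cross]
  simp only [integral_const_mul]
  rw [integral_convolution _ hf.integrable_fisherIntegrand hg.integrable,
    integral_convolution _ hf.integrable_deriv hg.integrable_deriv,
    integral_convolution _ hf.integrable hg.integrable_fisherIntegrand]
  simp [hf.integral_deriv, hf.integral_eq_one, hg.integral_eq_one, fisherInfo]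

theorem integral_combination_eq_deriv_convolution (hf : IsFisherDensity f)
    (hg : IsFisherDensity g) (s : ℝ) {y : ℝ}
    (h_left : Integrable fun x => deriv f x * g (y - x))
    (h_right : Integrable fun x => f x * deriv g (y - x)) :
    ∫ x, (s * (deriv f x * g (y - x)) + (1 - s) * (f x * deriv g (y - x))) = deriv (f ⋆ g) y := by
  have h_deriv_left : ∫ x, deriv f x * g (y - x) = deriv (f ⋆ g) y :=
    (hf.hasDerivAt_convolution_left hg y).deriv.symm
  have h_deriv_right : ∫ x, f x * deriv g (y - x) = deriv (f ⋆ g) y :=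
    (hf.hasDerivAt_convolution_right hg y).deriv.symm
  rw [integral_add (h_left.const_mul _) (h_right.const_mul _), integral_const_mul,
    integral_const_mul, h_deriv_left, h_deriv_right]
  ring

theorem fisherIntegrand_convolution_le (hf : IsFisherDensity f) (hg : IsFisherDensity g) (s : ℝ) :
    ∀ᵐ y, fisherIntegrand (f ⋆ g) y ≤ blachmanBound f g s y := by
  filter_upwards [
    hf.integrable_deriv.ae_convolution_exists (.lsmul ℝ ℝ) hg.integrable,
    hf.integrable.ae_convolution_exists (.lsmul ℝ ℝ) hg.integrable_deriv,
    hf.integrable_fisherIntegrand.ae_convolution_exists (.lsmul ℝ ℝ) hg.integrable,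
    hf.integrable_deriv.ae_convolution_exists (.lsmul ℝ ℝ) hg.integrable_deriv,
    hf.integrable.ae_convolution_exists (.lsmul ℝ ℝ) hg.integrable_fisherIntegrand]
    with y h_left h_right h_sq_left h_cross h_sq_right
  let u (x : ℝ) := s * (deriv f x * g (y - x)) + (1 - s) * (f x * deriv g (y - x))
  let w (x : ℝ) := f x * g (y - x)
  have hw (x : ℝ) : 0 < w x := mul_pos (hf.pos x) (hg.pos (y - x))
  have hu_int : Integrable u := (h_left.const_mul s).add (h_right.const_mul (1 - s))
  have h_eq : (fun x => u x ^ 2 / w x) = fun x => s ^ 2 * (fisherIntegrand f x * g (y - x))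
      + 2 * s * (1 - s) * (deriv f x * deriv g (y - x))
      + (1 - s) ^ 2 * (f x * fisherIntegrand g (y - x)) :=
    funext fun x => sq_combination_div s (hf.pos x).ne' (hg.pos (y - x)).ne'
  have h_int_left : Integrable fun x => s ^ 2 * (fisherIntegrand f x * g (y - x)) :=
    h_sq_left.const_mul _
  have h_int_cross : Integrable fun x => 2 * s * (1 - s) * (deriv f x * deriv g (y - x)) :=
    h_cross.const_mul _
  have h_int_right : Integrable fun x => (1 - s) ^ 2 * (f x * fisherIntegrand g (y - x)) :=
    h_sq_right.const_mul _
  calc fisherIntegrand (f ⋆ g) y = (∫ x, u x) ^ 2 / ∫ x, w x := by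
        rw [hf.integral_combination_eq_deriv_convolution hg s h_left h_right]
        rfl
    _ ≤ ∫ x, u x ^ 2 / w x :=
        sq_integral_div_le_integral_sq_div (.of_forall hw) hu_int (hf.convolutionExists hg y)
          (h_eq ▸ (h_int_left.fun_add h_int_cross).fun_add h_int_right)
    _ = blachmanBound f g s y := by
        rw [h_eq, integral_add (h_int_left.fun_add h_int_cross) h_int_right,
          integral_add h_int_left h_int_cross]
        simp only [integral_const_mul]
        rfl

theorem differentiable_convolution (hf : IsFisherDensity f) (hg : IsFisherDensity g) :
    Differentiable ℝ (f ⋆ g) := fun y =>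
  (hf.hasDerivAt_convolution_left hg y).differentiableAt

theorem convolution (hf : IsFisherDensity f) (hg : IsFisherDensity g) :
    IsFisherDensity (f ⋆ g) where
  pos := hf.convolution_pos hg
  differentiable := hf.differentiable_convolution hg
  integral_eq_one := hf.integral_convolution_eq_one hg
  integrable_fisherIntegrand := by
    refine (hf.integrable_blachmanBound hg 0).mono' ?_ ?_
    · exact ((measurable_deriv _).pow_const 2).div
        (hf.differentiable_convolution hg).continuous.measurable |>.aestronglyMeasurable
    · filter_upwards [hf.fisherIntegrand_convolution_le hg 0] with y hy
      rwa [Real.norm_of_nonneg (fisherIntegrand_nonneg (hf.convolution_pos hg y).le)]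

theorem fisherInfo_convolution_le (hf : IsFisherDensity f) (hg : IsFisherDensity g) (s : ℝ) :
    fisherInfo (f ⋆ g) ≤ s ^ 2 * fisherInfo f + (1 - s) ^ 2 * fisherInfo g :=
  calc fisherInfo (f ⋆ g) ≤ ∫ y, blachmanBound f g s y :=
        integral_mono_ae (hf.convolution hg).integrable_fisherIntegrand
          (hf.integrable_blachmanBound hg s) (hf.fisherIntegrand_convolution_le hg s)
    _ = s ^ 2 * fisherInfo f + (1 - s) ^ 2 * fisherInfo g := hf.integral_blachmanBound hg s

theorem one_div_fisherInfo_add_one_div_le (hf : IsFisherDensity f) (hg : IsFisherDensity g) :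
    1 / fisherInfo f + 1 / fisherInfo g ≤ 1 / fisherInfo (f ⋆ g) := by
  have hJf := hf.fisherInfo_pos
  have hJg := hg.fisherInfo_pos
  rw [le_one_div (by positivity) (hf.convolution hg).fisherInfo_pos]
  -- This `s` minimizes `s ^ 2 * fisherInfo f + (1 - s) ^ 2 * fisherInfo g`.
  let s := fisherInfo g / (fisherInfo f + fisherInfo g)
  refine (hf.fisherInfo_convolution_le hg s).trans_eq ?_
  simp only [s]
  field_simp
  ring

end IsFisherDensity

end FisherInformation

section Gaussian

theorem hasDerivAt_gaussianPDFReal (μ : ℝ) (v : ℝ≥0) (x : ℝ) :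
    HasDerivAt (gaussianPDFReal μ v) (-((x - μ) / v) * gaussianPDFReal μ v x) x := by
  have h := ((((hasDerivAt_id x).sub_const μ).pow 2).neg.div_const (2 * v : ℝ)).exp.const_mul
    (√(2 * Real.pi * v))⁻¹
  refine h.congr_deriv ?_
  simp only [gaussianPDFReal, id, Pi.neg_apply, Pi.pow_apply]
  ring

theorem fisherIntegrand_gaussianPDFReal (μ : ℝ) (v : ℝ≥0) (x : ℝ) :
    fisherIntegrand (gaussianPDFReal μ v) x =
      (v⁻¹ : ℝ) ^ 2 * (gaussianPDFReal μ v x * (x - μ) ^ 2) := by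
  rw [fisherIntegrand, (hasDerivAt_gaussianPDFReal μ v x).deriv]
  obtain rfl | hv := eq_or_ne v 0
  · simp
  have := (gaussianPDFReal_pos μ v x hv).ne'
  field_simp

theorem fisherInfo_gaussianPDFReal (μ : ℝ) (v : ℝ≥0) :
    fisherInfo (gaussianPDFReal μ v) = (v : ℝ)⁻¹ := by
  obtain rfl | hv := eq_or_ne v 0
  · simp [fisherInfo, fisherIntegrand]
  have h_var : ∫ x, gaussianPDFReal μ v x * (x - μ) ^ 2 = v := by
    have := variance_fun_id_gaussianReal (μ := μ) (v := v)
    rw [variance_eq_integral (by fun_prop), integral_id_gaussianReal,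
      integral_gaussianReal_eq_integral_smul hv] at this
    exact this
  simp_rw [fisherInfo, fisherIntegrand_gaussianPDFReal, integral_const_mul, h_var]
  field_simp

theorem isFisherDensity_gaussianPDFReal (μ : ℝ) {v : ℝ≥0} (hv : v ≠ 0) :
    IsFisherDensity (gaussianPDFReal μ v) where
  pos x := gaussianPDFReal_pos μ v x hv
  differentiable x := (hasDerivAt_gaussianPDFReal μ v x).differentiableAt
  integral_eq_one := integral_gaussianPDFReal_eq_one μ hv
  integrable_fisherIntegrand := .of_integral_ne_zero <| by
    change fisherInfo _ ≠ 0
    simpa [fisherInfo_gaussianPDFReal] using hv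

end Gaussian

theorem fisher_information_inequality_general
    (fX : ℝ → ℝ)
    (hfX_pos : ∀ x, 0 < fX x)
    (hfX_diff : Differentiable ℝ fX)
    (hfX_prob : (∫ x, fX x) = 1)
    (hfX_fisher_int : Integrable (fun x => (deriv fX x) ^ 2 / fX x))
    (fY : ℝ → ℝ → ℝ)
    (hfY : ∀ b, 0 < b → ∀ y, fY b y =
      ∫ x, fX x * ((Real.sqrt (2 * Real.pi * b))⁻¹ *
        Real.exp (-(y - x) ^ 2 / (2 * b))))
    (J : ℝ → ℝ)
    (hJ0 : J 0 = ∫ x, (deriv fX x) ^ 2 / fX x)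
    (hJb : ∀ b, 0 < b → J b =
      ∫ y, fY b y * (deriv (fun y' => Real.log (fY b y')) y) ^ 2) :
    ∀ a, 0 ≤ a → 1 / J a ≥ 1 / J 0 + a := by
  intro a ha
  obtain rfl | ha_pos := ha.eq_or_lt
  · simp
  lift a to ℝ≥0 using ha
  have hX : IsFisherDensity fX := ⟨hfX_pos, hfX_diff, hfX_prob, hfX_fisher_int⟩
  have hZ : IsFisherDensity (gaussianPDFReal 0 a) :=
    isFisherDensity_gaussianPDFReal 0 (NNReal.coe_pos.1 ha_pos).ne'
  have hY := hX.convolution hZ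
  have hfY_eq : fY a = fX ⋆ gaussianPDFReal 0 a := by
    ext y
    simp [hfY a ha_pos, convolution_lsmul, gaussianPDFReal]
  have hJa : J a = fisherInfo (fX ⋆ gaussianPDFReal 0 a) := by
    rw [hJb a ha_pos, hfY_eq,
      integral_mul_sq_deriv_log hY.differentiable fun y => (hY.pos y).ne']
  have hJX : J 0 = fisherInfo fX := hJ0
  simpa [hJa, hJX, fisherInfo_gaussianPDFReal] using hX.one_div_fisherInfo_add_one_div_le hZ

/-- **Fisher information inequality for Gaussian perturbation.** For `X` with
a differentiable everywhere positive density, finite second moment and finite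
positive Fisher information `J(X)`, and `Y = X + √a·W` with `W` standard
Gaussian independent of `X`, one has `1/J(a) ≥ 1/J(X) + a` for all `a ≥ 0`. -/
theorem fisher_information_inequality
    (fX : ℝ → ℝ)
    (hfX_pos : ∀ x, 0 < fX x)
    (hfX_diff : Differentiable ℝ fX)
    (hfX_prob : (∫ x, fX x) = 1)
    (hfX_mom : Integrable (fun x => x ^ 2 * fX x))
    (hfX_fisher_int : Integrable (fun x => (deriv fX x) ^ 2 / fX x))
    (fY : ℝ → ℝ → ℝ)
    (hfY : ∀ b, 0 < b → ∀ y, fY b y =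
      ∫ x, fX x * ((Real.sqrt (2 * Real.pi * b))⁻¹ *
        Real.exp (-(y - x) ^ 2 / (2 * b))))
    (J : ℝ → ℝ)
    (hJ0 : J 0 = ∫ x, (deriv fX x) ^ 2 / fX x)
    (hJ0_pos : 0 < J 0)
    (hJb : ∀ b, 0 < b → J b =
      ∫ y, fY b y * (deriv (fun y' => Real.log (fY b y')) y) ^ 2) :
    ∀ a, 0 ≤ a → 1 / J a ≥ 1 / J 0 + a :=
  fisher_information_inequality_general fX hfX_pos hfX_diff hfX_prob hfX_fisher_int fY hfY J hJ0 hJb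
end
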